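/- Fix θ₀ = (γ₀, μ₀, σ₀) ∈ (−1/2, ∞) × ℝ × (0, ∞) and define m_θ(x) = 2 log((p_θ(x) + p_{θ₀}(x))/(2 p_{θ₀}(x))) for x with p_{θ₀}(x) > 0, where p_θ is the GEV density. Then for every h ∈ ℝ³ and every family (h_t) in ℝ³ with h_t → h as t → 0, one has t^{−2} ∫ (m_{θ₀ + t h_t} − m_{θ₀}) dP_{θ₀} → −(1/4) hᵀ I_{θ₀} h as t → 0, where I_{θ₀} = ∫ ℓ̇_{θ₀} ℓ̇_{θ₀}ᵀ dP_{θ₀} is the Fisher information matrix of the GEV family at θ₀. -/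

import Mathlib

open MeasureTheory Filter Set Matrix

/-- `u_γ(z)` for the GEV family. -/
noncomputable def gevU (γ z : ℝ) : ℝ :=
  if γ = 0 then Real.exp (-z) else (1 + γ * z) ^ (-γ⁻¹)

/-- Lebesgue density of the GEV distribution with parameter `θ = (γ, μ, σ)`. -/
noncomputable def gevDensity (θ : ℝ × ℝ × ℝ) (x : ℝ) : ℝ :=
  if 0 < θ.2.2 + θ.1 * (x - θ.2.1) then
    (θ.2.2)⁻¹ * Real.exp (-(gevU θ.1 ((x - θ.2.1) / θ.2.2))) *
      gevU θ.1 ((x - θ.2.1) / θ.2.2) ^ (θ.1 + 1)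
  else 0

/-- The GEV probability measure with parameter `θ`. -/
noncomputable def gevMeasure (θ : ℝ × ℝ × ℝ) : Measure ℝ :=
  MeasureTheory.volume.withDensity fun x => ENNReal.ofReal (gevDensity θ x)

/-- The modified criterion function `m_θ = 2 log((p_θ + p_{θ₀})/(2 p_{θ₀}))`
relative to the reference parameter `θ₀`. -/
noncomputable def gevM (θ₀ θ : ℝ × ℝ × ℝ) (x : ℝ) : ℝ :=
  2 * Real.log ((gevDensity θ x + gevDensity θ₀ x) / (2 * gevDensity θ₀ x))

/-- `D(γ, z) = ∫₀^z t / (1 + γ t)² dt = ∂_γ log u_γ(z)`. -/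
noncomputable def gevDGamma (γ z : ℝ) : ℝ := ∫ t in (0:ℝ)..z, t / (1 + γ * t) ^ 2

/-- `∂_γ ℓ_θ(x)` on the support. -/
noncomputable def gevScoreGamma (θ : ℝ × ℝ × ℝ) (x : ℝ) : ℝ :=
  (1 - gevU θ.1 ((x - θ.2.1) / θ.2.2)) * gevDGamma θ.1 ((x - θ.2.1) / θ.2.2)
    - ((x - θ.2.1) / θ.2.2) / (1 + θ.1 * ((x - θ.2.1) / θ.2.2))

/-- `∂_μ ℓ_θ(x)` on the support. -/
noncomputable def gevScoreMu (θ : ℝ × ℝ × ℝ) (x : ℝ) : ℝ :=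
  (θ.1 + 1 - gevU θ.1 ((x - θ.2.1) / θ.2.2))
    / (θ.2.2 * (1 + θ.1 * ((x - θ.2.1) / θ.2.2)))

/-- `∂_σ ℓ_θ(x)` on the support. -/
noncomputable def gevScoreSigma (θ : ℝ × ℝ × ℝ) (x : ℝ) : ℝ :=
  ((1 - gevU θ.1 ((x - θ.2.1) / θ.2.2)) * ((x - θ.2.1) / θ.2.2) - 1)
    / (θ.2.2 * (1 + θ.1 * ((x - θ.2.1) / θ.2.2)))

/-- The GEV score vector `ℓ̇_θ(x)`, set to `0` off the support. -/
noncomputable def gevScore (θ : ℝ × ℝ × ℝ) (x : ℝ) : Fin 3 → ℝ :=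
  if 0 < θ.2.2 + θ.1 * (x - θ.2.1) then
    ![gevScoreGamma θ x, gevScoreMu θ x, gevScoreSigma θ x]
  else 0

/-- The Fisher information matrix `I_θ = ∫ ℓ̇_θ ℓ̇_θᵀ dP_θ` of the GEV family. -/
noncomputable def gevFisher (θ : ℝ × ℝ × ℝ) : Matrix (Fin 3) (Fin 3) ℝ :=
  Matrix.of fun i j => ∫ x, gevScore θ x i * gevScore θ x j ∂(gevMeasure θ)

/-- Coordinates of a GEV parameter vector. -/
def toVec3 (θ : ℝ × ℝ × ℝ) : Fin 3 → ℝ := ![θ.1, θ.2.1, θ.2.2]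

/-- `(e^w - 1)/w`. -/
noncomputable def gE1 (w : ℝ) : ℝ := ∫ s in (0:ℝ)..1, Real.exp (w * s)

/-- `(e^w - 1 - w)/w^2`. -/
noncomputable def gE2 (w : ℝ) : ℝ := ∫ s in (0:ℝ)..1, (1 - s) * Real.exp (w * s)

lemma gE1_cont : Continuous gE1 := by
  unfold gE1
  exact intervalIntegral.continuous_parametric_intervalIntegral_of_continuous' (by fun_prop) _ _

lemma gE2_cont : Continuous gE2 := by
  unfold gE2
  exact intervalIntegral.continuous_parametric_intervalIntegral_of_continuous' (by fun_prop) _ _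

lemma gE1_zero : gE1 0 = 1 := by simp [gE1]

lemma gE2_zero : gE2 0 = 1 / 2 := by
  simp only [gE2, zero_mul, Real.exp_zero, mul_one]
  rw [intervalIntegral.integral_sub (by simp) (by simp)]
  simp; norm_num

lemma gE1_eq (w : ℝ) : w * gE1 w = Real.exp w - 1 := by
  unfold gE1
  rw [← intervalIntegral.integral_const_mul]
  rw [intervalIntegral.integral_eq_sub_of_hasDerivAt (f := fun s => Real.exp (w * s))]
  · simp
  · intro s _
    have := (((hasDerivAt_id s).const_mul w)).exp
    simpa [mul_comm] using this
  · apply Continuous.intervalIntegrable; fun_prop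

lemma gE2_eq (w : ℝ) : w ^ 2 * gE2 w = Real.exp w - 1 - w := by
  unfold gE2
  rw [← intervalIntegral.integral_const_mul]
  rw [intervalIntegral.integral_eq_sub_of_hasDerivAt
    (f := fun s => (w * (1 - s) + 1) * Real.exp (w * s))]
  · simp; ring
  · intro s _
    have h1 : HasDerivAt (fun s => Real.exp (w * s)) (Real.exp (w * s) * w) s := by
      simpa using (((hasDerivAt_id s).const_mul w)).exp
    have h2 : HasDerivAt (fun s => w * (1 - s) + 1) (-w) s := by
      have := (((hasDerivAt_id s).const_sub 1).const_mul w).add_const 1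
      simpa using this
    refine (h2.mul h1).congr_deriv ?_
    ring
  · apply Continuous.intervalIntegrable; fun_prop

lemma gE1_nonneg (w : ℝ) : 0 ≤ gE1 w := by
  unfold gE1
  apply intervalIntegral.integral_nonneg (by norm_num)
  intro s _; positivity

lemma gE2_nonneg (w : ℝ) : 0 ≤ gE2 w := by
  unfold gE2
  apply intervalIntegral.integral_nonneg (by norm_num)
  intro s hs
  have : 0 ≤ 1 - s := by linarith [hs.2]
  positivity

lemma gE1_le {w M : ℝ} (h : w ≤ M) (h0 : 0 ≤ M) : gE1 w ≤ Real.exp M := by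
  have : gE1 w ≤ ∫ s in (0:ℝ)..1, Real.exp M := by
    unfold gE1
    apply intervalIntegral.integral_mono_on (by norm_num)
    · apply Continuous.intervalIntegrable; fun_prop
    · apply Continuous.intervalIntegrable; fun_prop
    · intro s hs
      apply Real.exp_le_exp.2
      nlinarith [hs.1, hs.2]
  simpa using this

lemma gE2_le {w M : ℝ} (h : w ≤ M) (h0 : 0 ≤ M) : gE2 w ≤ Real.exp M := by
  have : gE2 w ≤ ∫ s in (0:ℝ)..1, Real.exp M := by
    unfold gE2
    apply intervalIntegral.integral_mono_on (by norm_num)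
    · apply Continuous.intervalIntegrable; fun_prop
    · apply Continuous.intervalIntegrable; fun_prop
    · intro s hs
      have h1 : Real.exp (w * s) ≤ Real.exp M := by
        apply Real.exp_le_exp.2
        nlinarith [hs.1, hs.2]
      have h2 := Real.exp_pos (w * s)
      nlinarith [hs.1, hs.2]
  simpa using this

/-- The directional score as a function of `L = log u`. -/
noncomputable def gSig (θ k : ℝ × ℝ × ℝ) (l : ℝ) : ℝ :=
  k.1 * ((1 - Real.exp l) * (l ^ 2 * gE2 (θ.1 * l)) + l * gE1 (θ.1 * l))
  + k.2.1 * ((θ.1 + 1 - Real.exp l) * Real.exp (θ.1 * l) * θ.2.2⁻¹)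
  + k.2.2 * ((-(1 - Real.exp l) * (l * gE1 (θ.1 * l)) - Real.exp (θ.1 * l)) * θ.2.2⁻¹)

lemma gSig_smul (θ k : ℝ × ℝ × ℝ) (t l : ℝ) : gSig θ (t • k) l = t * gSig θ k l := by
  simp [gSig]; ring

lemma gSig_meas (k : ℝ × ℝ × ℝ) : Measurable (fun p : (ℝ × ℝ × ℝ) × ℝ => gSig p.1 k p.2) := by
  unfold gSig
  have h1 := gE1_cont.measurable
  have h2 := gE2_cont.measurable
  fun_prop

lemma gSig_cont_right (θ k : ℝ × ℝ × ℝ) : Continuous (gSig θ k) := by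
  unfold gSig
  have h1 := gE1_cont
  have h2 := gE2_cont
  fun_prop

lemma gSig_contAt (θ k : ℝ × ℝ × ℝ) (hσ : 0 < θ.2.2) (l : ℝ) :
    ContinuousAt (fun p : (ℝ × ℝ × ℝ) × (ℝ × ℝ × ℝ) => gSig p.1 p.2 l) (θ, k) := by
  unfold gSig
  have h1 := gE1_cont
  have h2 := gE2_cont
  have h3 : ContinuousAt (fun p : (ℝ × ℝ × ℝ) × (ℝ × ℝ × ℝ) => (p.1.2.2)⁻¹) (θ, k) :=
    ContinuousAt.inv₀ (by fun_prop) hσ.ne'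
  fun_prop

/-- dominating function -/
noncomputable def gDom (a b l : ℝ) : ℝ :=
  ((1 + Real.exp l) * (1 + l ^ 2) * Real.exp (max (a * l) (b * l))) ^ 2 * Real.exp (l - Real.exp l)

set_option maxHeartbeats 1000000 in
lemma gSig_bound (a b K : ℝ) (ha : a < 0) (hb : 0 < b) (hK : 0 ≤ K) (θ k : ℝ × ℝ × ℝ)
    (h1 : a ≤ θ.1) (h2 : θ.1 ≤ b)
    (hk1 : |k.1| ≤ K) (hk2 : |k.2.1 * θ.2.2⁻¹| ≤ K) (hk3 : |k.2.2 * θ.2.2⁻¹| ≤ K)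
    (hg : |θ.1 + 1| ≤ K) (l : ℝ) :
    |gSig θ k l| ≤ (5 * K + K ^ 2) * ((1 + Real.exp l) * (1 + l ^ 2) * Real.exp (max (a * l) (b * l))) := by
  set M := max (a * l) (b * l) with hM
  have hM0 : 0 ≤ M := by
    rcases le_total l 0 with h | h
    · exact le_max_of_le_left (by nlinarith)
    · exact le_max_of_le_right (by nlinarith)
  have hMg : θ.1 * l ≤ M := by
    rcases le_total l 0 with h | h
    · exact le_max_of_le_left (by nlinarith)
    · exact le_max_of_le_right (by nlinarith)
  have e1 := gE1_le hMg hM0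
  have e2 := gE2_le hMg hM0
  have e0 := Real.exp_le_exp.2 hMg
  have p1 := gE1_nonneg (θ.1 * l)
  have p2 := gE2_nonneg (θ.1 * l)
  have p0 := Real.exp_pos (θ.1 * l)
  set A := gE1 (θ.1 * l)
  set B := gE2 (θ.1 * l)
  set E := Real.exp (θ.1 * l)
  set X := Real.exp M
  have hu := Real.exp_pos l
  set u := Real.exp l
  have hu1 : |1 - u| ≤ 1 + u := by rw [abs_le]; constructor <;> linarith
  have hl : |l| ≤ 1 + l ^ 2 := by rw [abs_le]; constructor <;> nlinarith [sq_nonneg (l+1), sq_nonneg (l-1)]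
  have hX : 0 < X := Real.exp_pos M
  set T := (1 + u) * (1 + l ^ 2) * X with hT
  have hT0 : 0 ≤ T := by positivity
  have hlA : |l * A| ≤ (1 + l ^ 2) * X := by
    rw [abs_mul, abs_of_nonneg p1]; gcongr
  have t1 : |(1 - u) * (l ^ 2 * B)| ≤ T := by
    rw [abs_mul, abs_of_nonneg (by positivity : 0 ≤ l ^ 2 * B), hT, mul_assoc]
    gcongr; linarith
  have hge : (1 + l ^ 2) * X ≤ T := by rw [hT, mul_assoc]; nlinarith [mul_nonneg hu.le (by positivity : 0 ≤ (1+l^2) * X)]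
  have t2 : |l * A| ≤ T := hlA.trans hge
  have t3 : |(θ.1 + 1 - u) * E| ≤ (K + 1) * T := by
    rw [abs_mul, abs_of_pos p0]
    have : |θ.1 + 1 - u| ≤ K + u := by
      have := abs_sub (θ.1 + 1) u
      rw [abs_of_pos hu] at this; linarith
    have h5 : (K + u) * X ≤ (K + 1) * T := by
      have h6 : K + u ≤ (K + 1) * ((1 + u) * (1 + l ^ 2)) := by
        have : 1 + u ≤ (1 + u) * (1 + l ^ 2) := by nlinarith [mul_nonneg hu.le (sq_nonneg l), sq_nonneg l]
        nlinarith
      rw [hT]; nlinarith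
    refine le_trans ?_ h5
    gcongr
  have t4 : |-(1 - u) * (l * A)| ≤ T := by
    rw [abs_mul, abs_neg, hT, mul_assoc]; gcongr
  have t5 : |E| ≤ T := by
    rw [abs_of_pos p0]; refine le_trans e0 (le_trans ?_ hge); nlinarith [mul_nonneg (sq_nonneg l) hX.le]
  have s1 : |k.1 * ((1 - u) * (l ^ 2 * B) + l * A)| ≤ K * (2 * T) := by
    rw [abs_mul]; gcongr
    exact (abs_add_le _ _).trans (by linarith)
  have s2 : |k.2.1 * ((θ.1 + 1 - u) * E * θ.2.2⁻¹)| ≤ K * ((K + 1) * T) := by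
    rw [show k.2.1 * ((θ.1 + 1 - u) * E * θ.2.2⁻¹) = (k.2.1 * θ.2.2⁻¹) * ((θ.1 + 1 - u) * E) by ring,
      abs_mul]; gcongr
  have s3 : |k.2.2 * ((-(1 - u) * (l * A) - E) * θ.2.2⁻¹)| ≤ K * (2 * T) := by
    rw [show k.2.2 * ((-(1 - u) * (l * A) - E) * θ.2.2⁻¹) = (k.2.2 * θ.2.2⁻¹) * (-(1 - u) * (l * A) - E) by ring,
      abs_mul]; gcongr
    exact (abs_sub _ _).trans (by linarith)
  unfold gSig
  refine (abs_add_le _ _).trans ?_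
  have := abs_add_le (k.1 * ((1 - u) * (l ^ 2 * B) + l * A)) (k.2.1 * ((θ.1 + 1 - u) * E * θ.2.2⁻¹))
  have h9 : (5 * K + K ^ 2) * T = K * (2 * T) + K * ((K + 1) * T) + K * (2 * T) := by ring
  rw [h9]
  exact add_le_add (this.trans (add_le_add s1 s2)) s3

lemma gDom_integrable (a b : ℝ) (ha : a < 0) (ha2 : -(1/2) < a) (hb : 0 < b) :
    Integrable (gDom a b) := by
  have hc : Continuous (gDom a b) := by unfold gDom; fun_prop
  set ε := (1 + 2 * a) / 4 with hε
  have hε0 : 0 < ε := by rw [hε]; linarith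
  rw [← integrableOn_univ, ← Iic_union_Ioi (a := (0:ℝ))]
  apply IntegrableOn.union
  · have hI : IntegrableOn (fun l => 4 * (1 + 2 / ε ^ 2) ^ 2 * Real.exp ((2 * ε) * l)) (Iic (0:ℝ)) :=
      (integrableOn_exp_mul_Iic (by positivity) 0).const_mul _
    refine Integrable.mono' hI hc.aestronglyMeasurable ?_
    refine (ae_restrict_iff' measurableSet_Iic).2 (ae_of_all _ fun l hl => ?_)
    have hl : l ≤ 0 := hl
    have h1 : max (a * l) (b * l) = a * l := max_eq_left (by nlinarith)
    have h2 : 1 + l ^ 2 ≤ (1 + 2 / ε ^ 2) * Real.exp (- ε * l) := by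
      have := Real.quadratic_le_exp_of_nonneg (x := -ε * l) (by nlinarith)
      have h3 : l ^ 2 ≤ 2 / ε ^ 2 * Real.exp (-ε * l) := by
        rw [div_mul_eq_mul_div, le_div_iff₀ (by positivity)]; nlinarith
      have h4 : 1 ≤ Real.exp (-ε * l) := Real.one_le_exp (by nlinarith)
      linarith
    have h3 : 1 + Real.exp l ≤ 2 := by
      have := Real.exp_le_one_iff.2 hl; linarith
    have h4 : Real.exp (l - Real.exp l) ≤ Real.exp l := Real.exp_le_exp.2 (by linarith [Real.exp_pos l])
    unfold gDom
    rw [h1, Real.norm_eq_abs, abs_of_nonneg (by positivity)]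
    calc _ ≤ (2 * ((1 + 2 / ε ^ 2) * Real.exp (- ε * l)) * Real.exp (a * l)) ^ 2 * Real.exp l := by gcongr
      _ = 4 * (1 + 2 / ε ^ 2) ^ 2 * ((Real.exp (- ε * l) * Real.exp (a * l)) ^ 2 * Real.exp l) := by ring
      _ = _ := by
        rw [← Real.exp_add, ← Real.exp_nat_mul, ← Real.exp_add]
        congr 2; rw [hε]; push_cast; ring
  · obtain ⟨n, hn⟩ := exists_nat_gt b
    set N := 2 * n + 6
    have hI : IntegrableOn (fun l => (16 * N.factorial : ℝ) * Real.exp (-l)) (Ioi (0:ℝ)) :=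
      (integrableOn_exp_neg_Ioi 0).const_mul _
    refine Integrable.mono' hI hc.aestronglyMeasurable ?_
    refine (ae_restrict_iff' measurableSet_Ioi).2 (ae_of_all _ fun l hl => ?_)
    have hl : 0 < l := hl
    have h1 : max (a * l) (b * l) = b * l := max_eq_right (by nlinarith)
    have h2 : 1 + l ^ 2 ≤ 2 * Real.exp l := by
      have := Real.quadratic_le_exp_of_nonneg hl.le; nlinarith
    have h3 : 1 + Real.exp l ≤ 2 * Real.exp l := by
      have := Real.one_le_exp hl.le; linarith
    have h4 : Real.exp (b * l) ≤ Real.exp (n * l) := Real.exp_le_exp.2 (by gcongr)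
    have h5 := Real.pow_div_factorial_le_exp (Real.exp l) (Real.exp_pos l).le N
    rw [div_le_iff₀ (by positivity)] at h5
    unfold gDom
    rw [h1, Real.norm_eq_abs, abs_of_nonneg (by positivity)]
    calc _ ≤ (2 * Real.exp l * (2 * Real.exp l) * Real.exp (n * l)) ^ 2 * Real.exp (l - Real.exp l) := by gcongr
      _ = 16 * ((Real.exp l) ^ N) * Real.exp (-Real.exp l) * Real.exp (-l) := by
        rw [Real.exp_sub, Real.exp_neg, Real.exp_neg, Real.exp_nat_mul]
        field_simp; ring
      _ ≤ 16 * (Real.exp (Real.exp l) * N.factorial) * Real.exp (-Real.exp l) * Real.exp (-l) := by gcongr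
      _ = 16 * N.factorial * Real.exp (-l) * (Real.exp (Real.exp l) * Real.exp (-Real.exp l)) := by ring
      _ = _ := by rw [← Real.exp_add]; simp

/-- Fisher information quadratic form -/
noncomputable def gJ (θ k : ℝ × ℝ × ℝ) : ℝ := ∫ l, gSig θ k l ^ 2 * Real.exp (l - Real.exp l)

lemma gSig_dom_nhds (θ k : ℝ × ℝ × ℝ) (hγ : -(1/2) < θ.1) (hσ : 0 < θ.2.2) :
    ∃ a b C : ℝ, Integrable (gDom a b) ∧ ∀ᶠ p : (ℝ × ℝ × ℝ) × (ℝ × ℝ × ℝ) in nhds (θ, k),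
      ∀ l, gSig p.1 p.2 l ^ 2 * Real.exp (l - Real.exp l) ≤ C * gDom a b l := by
  obtain ⟨a, ha1, ha2⟩ : ∃ a, -(1/2) < a ∧ a < min θ.1 0 := exists_between (lt_min hγ (by norm_num))
  have ha3 := ha2.trans_le (min_le_left _ _)
  have ha4 := ha2.trans_le (min_le_right _ _)
  set b := max θ.1 0 + 1 with hb
  have hb1 : θ.1 < b := by have := le_max_left θ.1 0; linarith
  have hb2 : 0 < b := by have := le_max_right θ.1 0; linarith
  set K := |k.1| + |k.2.1 * θ.2.2⁻¹| + |k.2.2 * θ.2.2⁻¹| + |θ.1 + 1| + 1 with hK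
  have a1 := abs_nonneg k.1
  have a2 := abs_nonneg (k.2.1 * θ.2.2⁻¹)
  have a3 := abs_nonneg (k.2.2 * θ.2.2⁻¹)
  have a4 := abs_nonneg (θ.1 + 1)
  refine ⟨a, b, (5 * K + K ^ 2) ^ 2, gDom_integrable a b ha4 ha1 hb2, ?_⟩
  have hi : ContinuousAt (fun p : (ℝ × ℝ × ℝ) × (ℝ × ℝ × ℝ) => (p.1.2.2)⁻¹) (θ, k) :=
    ContinuousAt.inv₀ (by fun_prop) hσ.ne'
  have c1 : ContinuousAt (fun p : (ℝ × ℝ × ℝ) × (ℝ × ℝ × ℝ) => p.1.1) (θ, k) := by fun_prop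
  have c2 : ContinuousAt (fun p : (ℝ × ℝ × ℝ) × (ℝ × ℝ × ℝ) => p.1.2.2) (θ, k) := by fun_prop
  have c3 : ContinuousAt (fun p : (ℝ × ℝ × ℝ) × (ℝ × ℝ × ℝ) => |p.2.1|) (θ, k) := by fun_prop
  have c4 : ContinuousAt (fun p : (ℝ × ℝ × ℝ) × (ℝ × ℝ × ℝ) => |p.2.2.1 * p.1.2.2⁻¹|) (θ, k) := by fun_prop
  have c5 : ContinuousAt (fun p : (ℝ × ℝ × ℝ) × (ℝ × ℝ × ℝ) => |p.2.2.2 * p.1.2.2⁻¹|) (θ, k) := by fun_prop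
  have c6 : ContinuousAt (fun p : (ℝ × ℝ × ℝ) × (ℝ × ℝ × ℝ) => |p.1.1 + 1|) (θ, k) := by fun_prop
  filter_upwards [c1.eventually_lt_const hb1, c1.eventually_const_lt ha3, 
    c3.eventually_lt_const (show |k.1| < K by linarith),
    c4.eventually_lt_const (show |k.2.1 * θ.2.2⁻¹| < K by linarith),
    c5.eventually_lt_const (show |k.2.2 * θ.2.2⁻¹| < K by linarith),
    c6.eventually_lt_const (show |θ.1 + 1| < K by linarith)] with p q1 q2 q4 q5 q6 q7 l
  have := gSig_bound a b K ha4 hb2 (by linarith) p.1 p.2 q2.le q1.le q4.le q5.le q6.le q7.le l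
  unfold gDom
  rw [← mul_assoc, ← mul_pow, ← sq_abs (gSig _ _ _)]
  gcongr

lemma gSig_sq_integrable (θ k : ℝ × ℝ × ℝ) (hγ : -(1/2) < θ.1) (hσ : 0 < θ.2.2) :
    Integrable (fun l => gSig θ k l ^ 2 * Real.exp (l - Real.exp l)) := by
  obtain ⟨a, b, C, hI, hev⟩ := gSig_dom_nhds θ k hγ hσ
  have := hev.self_of_nhds
  refine Integrable.mono' (hI.const_mul C) ?_ (ae_of_all _ fun l => ?_)
  · have := gSig_cont_right θ k
    exact Continuous.aestronglyMeasurable (by fun_prop)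
  · rw [Real.norm_eq_abs, abs_of_nonneg (by positivity)]
    exact this l

lemma gJ_contAt (θ k : ℝ × ℝ × ℝ) (hγ : -(1/2) < θ.1) (hσ : 0 < θ.2.2) :
    ContinuousAt (fun p : (ℝ × ℝ × ℝ) × (ℝ × ℝ × ℝ) => gJ p.1 p.2) (θ, k) := by
  obtain ⟨a, b, C, hI, hev⟩ := gSig_dom_nhds θ k hγ hσ
  unfold gJ
  refine continuousAt_of_dominated (bound := fun l => C * gDom a b l) ?_ ?_ (hI.const_mul C) ?_
  · refine Eventually.of_forall fun p => ?_
    have := gSig_cont_right p.1 p.2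
    exact Continuous.aestronglyMeasurable (by fun_prop)
  · filter_upwards [hev] with p hp
    refine ae_of_all _ fun l => ?_
    rw [Real.norm_eq_abs, abs_of_nonneg (by positivity)]
    exact hp l
  · refine ae_of_all _ fun l => ?_
    exact ((gSig_contAt θ k hσ l).pow 2).mul continuousAt_const

lemma gE1_neg_mul_exp (w : ℝ) : gE1 (-w) * Real.exp w = gE1 w := by
  by_cases hw : w = 0
  · subst hw; simp
  · have h1 := gE1_eq w
    have h2 := gE1_eq (-w)
    have h3 : Real.exp (-w) * Real.exp w = 1 := by rw [← Real.exp_add]; simp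
    apply mul_left_cancel₀ hw
    linear_combination (-Real.exp w) * h2 - h1 - h3

lemma mul_gE2 (w : ℝ) : w * gE2 w = gE1 w - 1 := by
  by_cases hw : w = 0
  · subst hw; simp [gE1_zero]
  · have h1 := gE1_eq w
    have h2 := gE2_eq w
    apply mul_left_cancel₀ hw
    linear_combination h2 - h1

/-- `log u` as a function of `γ, z`. -/
noncomputable def gLog (γ z : ℝ) : ℝ := Real.log (gevU γ z)

lemma gevU_pos {γ z : ℝ} (h : 0 < 1 + γ * z) : 0 < gevU γ z := by
  unfold gevU; split_ifs
  · positivity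
  · positivity

lemma exp_gLog {γ z : ℝ} (h : 0 < 1 + γ * z) : Real.exp (gLog γ z) = gevU γ z :=
  Real.exp_log (gevU_pos h)

lemma gLog_zero (z : ℝ) : gLog 0 z = -z := by simp [gLog, gevU]

lemma gLog_ne {γ z : ℝ} (hγ : γ ≠ 0) (h : 0 < 1 + γ * z) : gLog γ z = -γ⁻¹ * Real.log (1 + γ * z) := by
  simp [gLog, gevU, hγ, Real.log_rpow h]

lemma gLog_exp {γ z : ℝ} (h : 0 < 1 + γ * z) : Real.exp (-(γ * gLog γ z)) = 1 + γ * z := by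
  by_cases hγ : γ = 0
  · subst hγ; simp
  · rw [gLog_ne hγ h, show -(γ * (-γ⁻¹ * Real.log (1 + γ * z))) = Real.log (1 + γ * z) by field_simp,
      Real.exp_log h]

lemma gLog_z {γ z : ℝ} (h : 0 < 1 + γ * z) : z = -(gLog γ z * gE1 (-(γ * gLog γ z))) := by
  by_cases hγ : γ = 0
  · subst hγ; simp [gLog_zero, gE1_zero]
  · have h1 := gE1_eq (-(γ * gLog γ z))
    rw [gLog_exp h] at h1
    apply mul_left_cancel₀ hγ
    linarith

lemma gLog_D {γ z : ℝ} (h : 0 < 1 + γ * z) :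
    gevDGamma γ z = gLog γ z ^ 2 * gE2 (γ * gLog γ z) := by
  by_cases hγ : γ = 0
  · subst hγ; simp [gLog_zero, gE2_zero, gevDGamma]; ring
  · have hpos : ∀ t ∈ uIcc 0 z, 0 < 1 + γ * t := by
      intro t ht
      rcases le_total 0 z with hz | hz
      · rw [uIcc_of_le hz] at ht
        rcases le_total 0 γ with hg | hg <;> nlinarith [ht.1, ht.2]
      · rw [uIcc_of_ge hz] at ht
        rcases le_total 0 γ with hg | hg <;> nlinarith [ht.1, ht.2]
    have h1 : gevDGamma γ z = (γ⁻¹ ^ 2 * (Real.log (1 + γ * z) + (1 + γ * z)⁻¹)) - γ⁻¹ ^ 2 := by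
      unfold gevDGamma
      rw [intervalIntegral.integral_eq_sub_of_hasDerivAt
        (f := fun t => γ⁻¹ ^ 2 * (Real.log (1 + γ * t) + (1 + γ * t)⁻¹))]
      · simp
      · intro t ht
        have hp := hpos t ht
        have d0 : HasDerivAt (fun t => 1 + γ * t) γ t := by
          simpa using ((hasDerivAt_id t).const_mul γ).const_add 1
        refine (((d0.log hp.ne').add (d0.inv hp.ne')).const_mul (γ⁻¹ ^ 2)).congr_deriv ?_
        field_simp; ring
      · apply ContinuousOn.intervalIntegrable
        apply ContinuousOn.div (by fun_prop) (by fun_prop)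
        intro t ht
        exact pow_ne_zero 2 (hpos t ht).ne'
    have h2 := gE2_eq (γ * gLog γ z)
    have h3 : Real.exp (γ * gLog γ z) = (1 + γ * z)⁻¹ := by
      rw [← gLog_exp h, ← Real.exp_neg, neg_neg]
    rw [h3] at h2
    have h4 : Real.log (1 + γ * z) = - (γ * gLog γ z) := by
      rw [gLog_ne hγ h]; field_simp
    rw [h1, h4]
    have h5 : gLog γ z ^ 2 * gE2 (γ * gLog γ z) = γ⁻¹ ^ 2 * ((γ * gLog γ z) ^ 2 * gE2 (γ * gLog γ z)) := by
      field_simp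
    rw [h5, h2]; ring

/-- `log u` at `x` -/
noncomputable def gL (θ : ℝ × ℝ × ℝ) (x : ℝ) : ℝ := gLog θ.1 ((x - θ.2.1) / θ.2.2)

lemma supp_iff {θ : ℝ × ℝ × ℝ} (hσ : 0 < θ.2.2) (x : ℝ) :
    0 < θ.2.2 + θ.1 * (x - θ.2.1) ↔ 0 < 1 + θ.1 * ((x - θ.2.1) / θ.2.2) := by
  have : θ.2.2 + θ.1 * (x - θ.2.1) = θ.2.2 * (1 + θ.1 * ((x - θ.2.1) / θ.2.2)) := by field_simp
  rw [this]; exact mul_pos_iff_of_pos_left hσ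

lemma gevDensity_eq {θ : ℝ × ℝ × ℝ} (hσ : 0 < θ.2.2) {x : ℝ} (hx : 0 < θ.2.2 + θ.1 * (x - θ.2.1)) :
    gevDensity θ x = θ.2.2⁻¹ * Real.exp (-Real.exp (gL θ x)) * Real.exp ((θ.1 + 1) * gL θ x) := by
  have h1 := (supp_iff hσ x).1 hx
  rw [gevDensity, if_pos hx, gL, exp_gLog h1, Real.rpow_def_of_pos (gevU_pos h1), gLog, mul_comm (θ.1 + 1)]

lemma gevDensity_pos {θ : ℝ × ℝ × ℝ} (hσ : 0 < θ.2.2) {x : ℝ} (hx : 0 < θ.2.2 + θ.1 * (x - θ.2.1)) :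
    0 < gevDensity θ x := by
  rw [gevDensity_eq hσ hx]; positivity

lemma gevDensity_nonneg {θ : ℝ × ℝ × ℝ} (hσ : 0 < θ.2.2) (x : ℝ) : 0 ≤ gevDensity θ x := by
  by_cases hx : 0 < θ.2.2 + θ.1 * (x - θ.2.1)
  · exact (gevDensity_pos hσ hx).le
  · simp [gevDensity, hx]

lemma score_eq {θ : ℝ × ℝ × ℝ} (hσ : 0 < θ.2.2) {x : ℝ} (hx : 0 < θ.2.2 + θ.1 * (x - θ.2.1))
    (k : ℝ × ℝ × ℝ) : toVec3 k ⬝ᵥ gevScore θ x = gSig θ k (gL θ x) := by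
  have h1 := (supp_iff hσ x).1 hx
  simp only [gevScore, if_pos hx, toVec3, gevScoreGamma, gevScoreMu, gevScoreSigma, gSig, gL]
  simp only [Matrix.vec3_dotProduct, Matrix.cons_val]
  set γ := θ.1
  set z := (x - θ.2.1) / θ.2.2
  set σ := θ.2.2
  rw [gLog_D h1, exp_gLog h1]
  have e1 := gLog_exp h1
  have e2 := gLog_z h1
  have e3 := gE1_neg_mul_exp (γ * gLog γ z)
  set l := gLog γ z
  have e4 : z / (1 + γ * z) = - (l * gE1 (γ * l)) := by
    rw [← e3, div_eq_mul_inv, ← e1, ← Real.exp_neg, neg_neg]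
    nth_rw 1 [e2]; ring
  have e5 : (1 + γ * z)⁻¹ = Real.exp (γ * l) := by
    rw [← e1, ← Real.exp_neg, neg_neg]
  have e6 : ∀ A, A / (σ * (1 + γ * z)) = A * Real.exp (γ * l) * σ⁻¹ := by
    intro A; rw [div_eq_mul_inv, mul_inv, e5]; ring
  have e7 : z * Real.exp (γ * l) = - (l * gE1 (γ * l)) := by rw [← e4, div_eq_mul_inv, e5]
  rw [e4, e6, e6]
  linear_combination (k.2.2 * (1 - gevU γ z) * σ⁻¹) * e7

/-- inverse of `gL` -/
noncomputable def gX (θ : ℝ × ℝ × ℝ) (l : ℝ) : ℝ := θ.2.1 - θ.2.2 * (l * gE1 (-(θ.1 * l)))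

lemma gX_z {θ : ℝ × ℝ × ℝ} (hσ : 0 < θ.2.2) (l : ℝ) :
    (gX θ l - θ.2.1) / θ.2.2 = -(l * gE1 (-(θ.1 * l))) := by
  unfold gX; field_simp; ring

lemma gX_one_add {θ : ℝ × ℝ × ℝ} (hσ : 0 < θ.2.2) (l : ℝ) :
    1 + θ.1 * ((gX θ l - θ.2.1) / θ.2.2) = Real.exp (-(θ.1 * l)) := by
  rw [gX_z hσ]
  have := gE1_eq (-(θ.1 * l))
  linarith

lemma gX_supp {θ : ℝ × ℝ × ℝ} (hσ : 0 < θ.2.2) (l : ℝ) :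
    0 < θ.2.2 + θ.1 * (gX θ l - θ.2.1) := by
  rw [supp_iff hσ, gX_one_add hσ]; positivity

lemma gL_gX {θ : ℝ × ℝ × ℝ} (hσ : 0 < θ.2.2) (l : ℝ) : gL θ (gX θ l) = l := by
  unfold gL
  have h1 := gX_one_add hσ l
  by_cases hγ : θ.1 = 0
  · rw [hγ, gLog_zero, gX_z hσ, hγ]; simp [gE1_zero]
  · rw [gLog_ne hγ (by rw [h1]; positivity), h1, Real.log_exp]; field_simp

lemma gX_gL {θ : ℝ × ℝ × ℝ} (hσ : 0 < θ.2.2) {x : ℝ} (hx : 0 < θ.2.2 + θ.1 * (x - θ.2.1)) :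
    gX θ (gL θ x) = x := by
  have h1 := (supp_iff hσ x).1 hx
  have e2 := gLog_z h1
  unfold gX gL
  rw [show θ.2.1 - θ.2.2 * (gLog θ.1 ((x - θ.2.1) / θ.2.2) * gE1 (-(θ.1 * gLog θ.1 ((x - θ.2.1) / θ.2.2))))
    = θ.2.1 + θ.2.2 * (-(gLog θ.1 ((x - θ.2.1) / θ.2.2) * gE1 (-(θ.1 * gLog θ.1 ((x - θ.2.1) / θ.2.2))))) by ring,
    ← e2]
  field_simp; ring

lemma gX_deriv (θ : ℝ × ℝ × ℝ) (l : ℝ) :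
    HasDerivAt (gX θ) (-θ.2.2 * Real.exp (-(θ.1 * l))) l := by
  by_cases hγ : θ.1 = 0
  · have : gX θ = fun l => θ.2.1 - θ.2.2 * l := by
      funext l; simp [gX, hγ, gE1_zero]
    rw [this]
    refine (((hasDerivAt_id l).const_mul θ.2.2).const_sub θ.2.1).congr_deriv ?_
    simp [hγ]
  · have : gX θ = fun l => θ.2.1 - θ.2.2 * ((1 - Real.exp (-θ.1 * l)) * θ.1⁻¹) := by
      funext l
      have := gE1_eq (-(θ.1 * l))
      simp only [gX]
      congr 2
      rw [neg_mul, eq_mul_inv_iff_mul_eq₀ hγ]; linarith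
    rw [this]
    have h1 : HasDerivAt (fun l => Real.exp (-θ.1 * l)) (Real.exp (-θ.1 * l) * (-θ.1)) l := by
      simpa using ((hasDerivAt_id l).const_mul (-θ.1)).exp
    refine ((((h1.const_sub 1).mul_const θ.1⁻¹).const_mul θ.2.2).const_sub θ.2.1).congr_deriv ?_
    rw [neg_mul θ.1]
    field_simp

lemma gevU_meas : Measurable (fun p : ℝ × ℝ => gevU p.1 p.2) := by
  unfold gevU
  refine Measurable.ite (measurableSet_eq_fun measurable_fst measurable_const) ?_ ?_
  · fun_prop
  · fun_prop

lemma gL_meas : Measurable (fun p : (ℝ × ℝ × ℝ) × ℝ => gL p.1 p.2) := by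
  unfold gL gLog
  have h : Measurable (fun p : (ℝ × ℝ × ℝ) × ℝ => (p.1.1, (p.2 - p.1.2.1) / p.1.2.2)) := by fun_prop
  exact Real.measurable_log.comp (gevU_meas.comp h)

lemma gevDensity_meas : Measurable (fun p : (ℝ × ℝ × ℝ) × ℝ => gevDensity p.1 p.2) := by
  unfold gevDensity
  have h : Measurable (fun p : (ℝ × ℝ × ℝ) × ℝ => (p.1.1, (p.2 - p.1.2.1) / p.1.2.2)) := by fun_prop
  have h2 := gevU_meas.comp h
  simp only [Function.comp_def] at h2
  refine Measurable.ite (measurableSet_lt measurable_const (by fun_prop)) ?_ measurable_const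
  fun_prop

lemma gev_lintegral {θ : ℝ × ℝ × ℝ} (hσ : 0 < θ.2.2) (G : ℝ → ENNReal) :
    ∫⁻ x, ENNReal.ofReal (gevDensity θ x) * G (gL θ x) =
      ∫⁻ l, ENNReal.ofReal (Real.exp (l - Real.exp l)) * G l := by
  have himg : gX θ '' univ = {x | 0 < θ.2.2 + θ.1 * (x - θ.2.1)} := by
    ext x; constructor
    · rintro ⟨l, -, rfl⟩; exact gX_supp hσ l
    · intro hx; exact ⟨gL θ x, trivial, gX_gL hσ hx⟩
  have hinj : InjOn (gX θ) univ := by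
    intro a _ b _ hab
    rw [← gL_gX hσ a, ← gL_gX hσ b, hab]
  have h1 := lintegral_image_eq_lintegral_abs_deriv_mul MeasurableSet.univ
    (fun l _ => (gX_deriv θ l).hasDerivWithinAt) hinj
    (fun x => ENNReal.ofReal (gevDensity θ x) * G (gL θ x))
  rw [himg, Measure.restrict_univ, setLIntegral_eq_of_support_subset] at h1
  · rw [h1]
    congr 1; funext l
    rw [gL_gX hσ, ← mul_assoc, ← ENNReal.ofReal_mul (abs_nonneg _), gevDensity_eq hσ (gX_supp hσ l), gL_gX hσ]
    congr 2
    rw [abs_mul, abs_neg, abs_of_pos hσ, Real.abs_exp]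
    rw [sub_eq_add_neg, Real.exp_add]
    have : Real.exp l = Real.exp (-(θ.1 * l)) * Real.exp ((θ.1 + 1) * l) := by
      rw [← Real.exp_add]; ring_nf
    generalize Real.exp (-Real.exp l) = V
    rw [this]
    field_simp
  · intro x hx
    by_contra hc
    simp only [mem_ofPred_eq] at hc
    simp [gevDensity, hc] at hx

/-- `log(1+w)/w` -/
noncomputable def gG (w : ℝ) : ℝ := if w = 0 then 1 else Real.log (1 + w) / w

/-- derivative of `gG` -/
noncomputable def gdG (w : ℝ) : ℝ :=
  if w = 0 then -(1/2) else ((1 + w)⁻¹ * w - Real.log (1 + w)) / w ^ 2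

lemma gG_deriv {w : ℝ} (h : 0 < 1 + w) : HasDerivAt gG (gdG w) w := by
  by_cases hw : w = 0
  · subst hw
    simp only [gdG, if_true]
    rw [hasDerivAt_iff_isLittleO_nhds_zero]
    have hO : (fun h : ℝ => gG (0 + h) - gG 0 - h • (-(1/2))) =O[nhds 0] (fun h : ℝ => h ^ 2) := by
      refine Asymptotics.IsBigO.of_bound 2 ?_
      have : ∀ᶠ h : ℝ in nhds 0, |h| < 1/2 := by
        have : ContinuousAt (fun h : ℝ => |h|) 0 := by fun_prop
        exact this.eventually_lt_const (by simp)
      filter_upwards [this] with h hh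
      by_cases h0 : h = 0
      · subst h0; simp
      · have h1 := Real.abs_log_sub_add_sum_range_le (x := -h) (by rw [abs_neg]; linarith) 2
        simp only [Finset.sum_range_succ, Finset.sum_range_zero, abs_neg] at h1
        norm_num at h1
        have h2 : |h| ^ 3 / (1 - |h|) ≤ 2 * |h| ^ 3 := by
          rw [div_le_iff₀ (by linarith)]
          have : 0 ≤ |h| ^ 3 := by positivity
          nlinarith
        have h3 : gG (0 + h) - gG 0 - h • (-(1/2)) = (-h + h ^ 2 / 2 + Real.log (1 + h)) / h := by
          simp only [gG, zero_add, if_neg h0, if_true, smul_eq_mul]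
          field_simp; ring
        have hp : 0 < |h| := abs_pos.2 h0
        rw [h3, Real.norm_eq_abs, abs_div, div_le_iff₀ hp, Real.norm_eq_abs, abs_pow]
        calc _ ≤ _ := h1
          _ ≤ _ := h2
          _ = _ := by ring
    refine hO.trans_isLittleO ?_
    have := Asymptotics.isLittleO_pow_id (𝕜 := ℝ) (n := 2) (by norm_num)
    simpa using this
  · have hev : gG =ᶠ[nhds w] fun w => Real.log (1 + w) / w := by
      filter_upwards [isOpen_ne.mem_nhds hw] with v hv
      simp only [gG]; rw [if_neg hv]
    refine HasDerivAt.congr_of_eventuallyEq ?_ hev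
    have d0 : HasDerivAt (fun t : ℝ => 1 + t) 1 w := by
      simpa using (hasDerivAt_id w).const_add 1
    refine ((d0.log h.ne').div (hasDerivAt_id w) hw).congr_deriv ?_
    simp only [gdG, if_neg hw, id]
    field_simp

lemma gLog_gG {γ z : ℝ} (h : 0 < 1 + γ * z) : gLog γ z = -(z * gG (γ * z)) := by
  by_cases hγ : γ = 0
  · subst hγ; simp [gLog_zero, gG]
  · by_cases hz : z = 0
    · subst hz; rw [gLog_ne hγ h]; simp
    · rw [gLog_ne hγ h, gG, if_neg (mul_ne_zero hγ hz)]; field_simp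

lemma gdG_D {γ z : ℝ} (h : 0 < 1 + γ * z) :
    -(z ^ 2 * gdG (γ * z)) = gLog γ z ^ 2 * gE2 (γ * gLog γ z) := by
  by_cases hγ : γ = 0
  · subst hγ; simp [gLog_zero, gdG, gE2_zero]
  · by_cases hz : z = 0
    · subst hz; rw [gLog_ne hγ h]; simp
    · have h2 := gE2_eq (γ * gLog γ z)
      have h3 : Real.exp (γ * gLog γ z) = (1 + γ * z)⁻¹ := by
        rw [← gLog_exp h, ← Real.exp_neg, neg_neg]
      rw [h3] at h2
      have h4 : Real.log (1 + γ * z) = - (γ * gLog γ z) := by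
        rw [gLog_ne hγ h]; field_simp
      rw [gdG, if_neg (mul_ne_zero hγ hz), h4]
      have h5 : gLog γ z ^ 2 * gE2 (γ * gLog γ z) = γ⁻¹ ^ 2 * ((γ * gLog γ z) ^ 2 * gE2 (γ * gLog γ z)) := by
        field_simp
      rw [h5, h2]
      have hne := h.ne'
      have h6 : (1 + γ * z)⁻¹ * (γ * z) = 1 - (1 + γ * z)⁻¹ := by
        have := inv_mul_cancel₀ hne
        linarith
      rw [h6]
      field_simp; ring

lemma gdG_z {w : ℝ} (h : 0 < 1 + w) : gG w + w * gdG w = (1 + w)⁻¹ := by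
  by_cases hw : w = 0
  · subst hw; simp [gG]
  · simp only [gG, gdG, if_neg hw]; field_simp; ring

lemma gL_hasFDeriv {θ : ℝ × ℝ × ℝ} (hσ : 0 < θ.2.2) {x : ℝ} (hx : 0 < θ.2.2 + θ.1 * (x - θ.2.1)) :
    ∃ D : (ℝ × ℝ × ℝ) →L[ℝ] ℝ, HasFDerivAt (fun θ => gL θ x) D θ ∧
      ∀ k, D k = k.1 * (gL θ x ^ 2 * gE2 (θ.1 * gL θ x)) + k.2.1 * (Real.exp (θ.1 * gL θ x) * θ.2.2⁻¹)
        + k.2.2 * (((x - θ.2.1) / θ.2.2) * Real.exp (θ.1 * gL θ x) * θ.2.2⁻¹) := by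
  have h1 := (supp_iff hσ x).1 hx
  have f1 : HasFDerivAt (fun θ : ℝ × ℝ × ℝ => θ.1) (ContinuousLinearMap.fst ℝ ℝ (ℝ × ℝ)) θ := hasFDerivAt_fst
  have f2 : HasFDerivAt (fun θ : ℝ × ℝ × ℝ => θ.2.1)
    ((ContinuousLinearMap.fst ℝ ℝ ℝ).comp (ContinuousLinearMap.snd ℝ ℝ (ℝ × ℝ))) θ :=
    hasFDerivAt_fst.comp θ hasFDerivAt_snd
  have f3 : HasFDerivAt (fun θ : ℝ × ℝ × ℝ => θ.2.2)
    ((ContinuousLinearMap.snd ℝ ℝ ℝ).comp (ContinuousLinearMap.snd ℝ ℝ (ℝ × ℝ))) θ :=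
    hasFDerivAt_snd.comp θ hasFDerivAt_snd
  have f4 := (hasDerivAt_inv hσ.ne').comp_hasFDerivAt θ f3
  have fz := (f2.const_sub x).mul f4
  have fw := f1.mul fz
  have fg := (gG_deriv (w := θ.1 * ((x - θ.2.1) * θ.2.2⁻¹)) (by rwa [← div_eq_mul_inv])).comp_hasFDerivAt θ fw
  have fl := (fz.mul fg).neg
  refine ⟨_, fl.congr_of_eventuallyEq ?_, ?_⟩
  · have c1 : ContinuousAt (fun θ : ℝ × ℝ × ℝ => θ.2.2 + θ.1 * (x - θ.2.1)) θ := by fun_prop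
    have c2 : ContinuousAt (fun θ : ℝ × ℝ × ℝ => θ.2.2) θ := by fun_prop
    filter_upwards [c1.eventually_const_lt hx, c2.eventually_const_lt hσ] with p hp hp2
    have := (supp_iff hp2 x).1 hp
    simp only [gL]
    rw [gLog_gG this]
    simp [div_eq_mul_inv]
  · intro k
    have e1 := gdG_D h1
    have e2 := gdG_z h1
    have e5 : (1 + θ.1 * ((x - θ.2.1) / θ.2.2))⁻¹ = Real.exp (θ.1 * gL θ x) := by
      rw [← gLog_exp h1, ← Real.exp_neg, neg_neg]; rfl
    rw [← e5, ← e2, gL, ← e1]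
    simp [div_eq_mul_inv]
    field_simp
    ring

lemma dens_hasFDeriv {θ : ℝ × ℝ × ℝ} (hσ : 0 < θ.2.2) {x : ℝ} (hx : 0 < θ.2.2 + θ.1 * (x - θ.2.1)) :
    ∃ D : (ℝ × ℝ × ℝ) →L[ℝ] ℝ, HasFDerivAt (fun θ => gevDensity θ x) D θ ∧
      ∀ k, D k = gevDensity θ x * gSig θ k (gL θ x) := by
  have h1 := (supp_iff hσ x).1 hx
  obtain ⟨D, hD, hDk⟩ := gL_hasFDeriv hσ hx
  have f1 : HasFDerivAt (fun θ : ℝ × ℝ × ℝ => θ.1) (ContinuousLinearMap.fst ℝ ℝ (ℝ × ℝ)) θ := hasFDerivAt_fst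
  have f3 : HasFDerivAt (fun θ : ℝ × ℝ × ℝ => θ.2.2)
    ((ContinuousLinearMap.snd ℝ ℝ ℝ).comp (ContinuousLinearMap.snd ℝ ℝ (ℝ × ℝ))) θ :=
    hasFDerivAt_snd.comp θ hasFDerivAt_snd
  have f4 := (hasDerivAt_inv hσ.ne').comp_hasFDerivAt θ f3
  have fp := (f4.mul (hD.exp.neg.exp)).mul (((f1.add_const 1).mul hD).exp)
  refine ⟨_, fp.congr_of_eventuallyEq ?_, ?_⟩
  · have c1 : ContinuousAt (fun θ : ℝ × ℝ × ℝ => θ.2.2 + θ.1 * (x - θ.2.1)) θ := by fun_prop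
    have c2 : ContinuousAt (fun θ : ℝ × ℝ × ℝ => θ.2.2) θ := by fun_prop
    filter_upwards [c1.eventually_const_lt hx, c2.eventually_const_lt hσ] with p hp hp2
    rw [gevDensity_eq hp2 hp]
    simp
  · intro k
    rw [gevDensity_eq hσ hx]
    simp [hDk, gSig]
    have e1 := gLog_exp h1
    have e2 := mul_gE2 (θ.1 * gL θ x)
    have e3 : Real.exp (θ.1 * gL θ x) * (1 + θ.1 * ((x - θ.2.1) / θ.2.2)) = 1 := by
      rw [← e1, ← Real.exp_add]; simp [gL]
    have e4 : ((x - θ.2.1) / θ.2.2) * Real.exp (θ.1 * gL θ x) = - (gL θ x * gE1 (θ.1 * gL θ x)) := by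
      have := gLog_z h1
      rw [← gE1_neg_mul_exp]
      nth_rw 1 [this]
      simp only [gL]; ring
    set z := (x - θ.2.1) / θ.2.2
    set l := gL θ x
    set u := Real.exp l
    set E := Real.exp (θ.1 * l)
    set A := gE1 (θ.1 * l)
    set B := gE2 (θ.1 * l)
    set P := Real.exp (-u)
    set Q := Real.exp ((θ.1 + 1) * l)
    have hs : (θ.2.2 ^ 2)⁻¹ = θ.2.2⁻¹ ^ 2 := by rw [inv_pow]
    simp only [hs]
    set s := θ.2.2⁻¹
    linear_combination (s * P * Q * k.1 * l) * e2 + (s^2 * P * Q * k.2.2 * (1 - u)) * e4 + (s^2 * P * Q * k.2.2) * e3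

lemma exp_rpow_bound (N : ℕ) {u a : ℝ} (hu : 0 < u) (ha : 0 ≤ a) (haN : a + 1 ≤ N) :
    Real.exp (-u) * u ^ a ≤ (1 + N.factorial) * u⁻¹ := by
  have h0 : u ^ a = u ^ (a + 1) * u⁻¹ := by
    rw [Real.rpow_add hu, Real.rpow_one]; field_simp
  rw [h0, ← mul_assoc]
  gcongr
  rcases le_total u 1 with h | h
  · have h1 : Real.exp (-u) ≤ 1 := Real.exp_le_one_iff.2 (by linarith)
    have h2 : u ^ (a + 1) ≤ 1 := Real.rpow_le_one hu.le h (by linarith)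
    have h3 : 0 ≤ u ^ (a + 1) := by positivity
    have h4 := Real.exp_pos (-u)
    have : (0:ℝ) ≤ N.factorial := by positivity
    nlinarith
  · have h1 : u ^ (a + 1) ≤ u ^ N := by
      rw [← Real.rpow_natCast]; exact Real.rpow_le_rpow_of_exponent_le h haN
    have h2 := Real.pow_div_factorial_le_exp u hu.le N
    rw [div_le_iff₀ (by positivity)] at h2
    calc _ ≤ Real.exp (-u) * (Real.exp u * N.factorial) := by gcongr; exact h1.trans h2
      _ = N.factorial := by rw [← mul_assoc, ← Real.exp_add]; simp
      _ ≤ _ := by linarith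

lemma dens_contAt {θ : ℝ × ℝ × ℝ} (hσ : 0 < θ.2.2) (hγ : -1 < θ.1) (x : ℝ) :
    ContinuousAt (fun θ => gevDensity θ x) θ := by
  have c1 : ContinuousAt (fun θ : ℝ × ℝ × ℝ => θ.2.2 + θ.1 * (x - θ.2.1)) θ := by fun_prop
  have c2 : ContinuousAt (fun θ : ℝ × ℝ × ℝ => θ.2.2) θ := by fun_prop
  have c3 : ContinuousAt (fun θ : ℝ × ℝ × ℝ => θ.1) θ := by fun_prop
  have ci : ContinuousAt (fun θ : ℝ × ℝ × ℝ => θ.2.2⁻¹) θ := c2.inv₀ hσ.ne'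
  have cw : ContinuousAt (fun θ : ℝ × ℝ × ℝ => max (1 + θ.1 * ((x - θ.2.1) * θ.2.2⁻¹)) 0) θ := by fun_prop
  rcases lt_trichotomy (θ.2.2 + θ.1 * (x - θ.2.1)) 0 with hy | hy | hy
  · refine (continuousAt_const (y := (0:ℝ))).congr ?_
    filter_upwards [c1.eventually_lt_const hy] with p hp
    simp [gevDensity, not_lt.2 hp.le]
  · have hv : gevDensity θ x = 0 := by simp [gevDensity, hy]
    have hw0 : 1 + θ.1 * ((x - θ.2.1) * θ.2.2⁻¹) = 0 := by
      have : θ.2.2 * (1 + θ.1 * ((x - θ.2.1) * θ.2.2⁻¹)) = 0 := by rw [← hy]; field_simp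
      exact (mul_eq_zero.1 this).resolve_left hσ.ne'
    have hg0 : θ.1 ≠ 0 := by rintro h; simp [h] at hw0
    have cgi : ContinuousAt (fun θ : ℝ × ℝ × ℝ => θ.1⁻¹) θ := c3.inv₀ hg0
    unfold ContinuousAt
    simp only [hv]
    rcases lt_or_gt_of_ne hg0 with hg | hg
    · set Bf : ℝ × ℝ × ℝ → ℝ := fun θ => θ.2.2⁻¹ * ((max (1 + θ.1 * ((x - θ.2.1) * θ.2.2⁻¹)) 0) ^ (-θ.1⁻¹)) ^ (θ.1 + 1) with hBf
      have hBc : ContinuousAt Bf θ := by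
        refine ci.mul (ContinuousAt.rpow (ContinuousAt.rpow cw cgi.neg (Or.inr ?_)) (by fun_prop) (Or.inr ?_))
        · simpa using hg
        · linarith
      have hB0 : Bf θ = 0 := by
        simp only [hBf, hw0, max_self]
        rw [Real.zero_rpow (by simpa using hg0), Real.zero_rpow (by linarith), mul_zero]
      have hBt : Tendsto Bf (nhds θ) (nhds 0) := by rw [← hB0]; exact hBc
      refine tendsto_of_tendsto_of_tendsto_of_le_of_le' tendsto_const_nhds hBt ?_ ?_
      · filter_upwards [c2.eventually_const_lt hσ] with p hp using gevDensity_nonneg hp x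
      · filter_upwards [c2.eventually_const_lt hσ, c3.eventually_lt_const hg] with p hp hpg
        by_cases hs : 0 < p.2.2 + p.1 * (x - p.2.1)
        · have h1 := (supp_iff hp x).1 hs
          have hu := gevU_pos h1
          simp only [gevDensity, if_pos hs, hBf]
          rw [← div_eq_mul_inv, max_eq_left h1.le]
          have : Real.exp (-gevU p.1 ((x - p.2.1) / p.2.2)) ≤ 1 := Real.exp_le_one_iff.2 (by linarith)
          have h5 : gevU p.1 ((x - p.2.1) / p.2.2) = (1 + p.1 * ((x - p.2.1) / p.2.2)) ^ (-p.1⁻¹) := by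
            simp [gevU, hpg.ne]
          rw [← h5]
          gcongr
          exact mul_le_of_le_one_right (by positivity) this
        · simp only [gevDensity, if_neg hs, hBf]; positivity
    · obtain ⟨N, hN⟩ := exists_nat_gt (θ.1 + 2)
      set Bf : ℝ × ℝ × ℝ → ℝ := fun θ => θ.2.2⁻¹ * ((1 + N.factorial) * (max (1 + θ.1 * ((x - θ.2.1) * θ.2.2⁻¹)) 0) ^ (θ.1⁻¹)) with hBf
      have hBc : ContinuousAt Bf θ := by
        refine ci.mul (continuousAt_const.mul (ContinuousAt.rpow cw cgi (Or.inr ?_)))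
        simpa using hg
      have hB0 : Bf θ = 0 := by
        simp only [hBf, hw0, max_self]
        rw [Real.zero_rpow (by simpa using hg0), mul_zero, mul_zero]
      have hBt : Tendsto Bf (nhds θ) (nhds 0) := by rw [← hB0]; exact hBc
      refine tendsto_of_tendsto_of_tendsto_of_le_of_le' tendsto_const_nhds hBt ?_ ?_
      · filter_upwards [c2.eventually_const_lt hσ] with p hp using gevDensity_nonneg hp x
      · filter_upwards [c2.eventually_const_lt hσ, c3.eventually_const_lt hg,
          c3.eventually_lt_const (show θ.1 < N - 2 by linarith)] with p hp hpg hpN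
        by_cases hs : 0 < p.2.2 + p.1 * (x - p.2.1)
        · have h1 := (supp_iff hp x).1 hs
          have hu := gevU_pos h1
          simp only [gevDensity, if_pos hs, hBf]
          rw [← div_eq_mul_inv, max_eq_left h1.le]
          have h5 : (gevU p.1 ((x - p.2.1) / p.2.2))⁻¹ = (1 + p.1 * ((x - p.2.1) / p.2.2)) ^ (p.1⁻¹) := by
            simp [gevU, hpg.ne', Real.rpow_neg h1.le]
          rw [← h5, mul_assoc]
          exact mul_le_mul_of_nonneg_left (exp_rpow_bound N hu (by linarith) (by linarith)) (by positivity)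
        · simp only [gevDensity, if_neg hs, hBf]; positivity
  · obtain ⟨D, hD, -⟩ := dens_hasFDeriv hσ hy
    exact hD.continuousAt

/-- square root of density -/
noncomputable def gQ (θ : ℝ × ℝ × ℝ) (x : ℝ) : ℝ := Real.sqrt (gevDensity θ x)

lemma gQ_contAt {θ : ℝ × ℝ × ℝ} (hσ : 0 < θ.2.2) (hγ : -1 < θ.1) (x : ℝ) :
    ContinuousAt (fun θ => gQ θ x) θ := (dens_contAt hσ hγ x).sqrt

lemma gQ_hasFDeriv {θ : ℝ × ℝ × ℝ} (hσ : 0 < θ.2.2) {x : ℝ} (hx : 0 < θ.2.2 + θ.1 * (x - θ.2.1)) :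
    ∃ D : (ℝ × ℝ × ℝ) →L[ℝ] ℝ, HasFDerivAt (fun θ => gQ θ x) D θ ∧
      ∀ k, D k = 1 / 2 * gQ θ x * gSig θ k (gL θ x) := by
  obtain ⟨D, hD, hDk⟩ := dens_hasFDeriv hσ hx
  have hp := gevDensity_pos hσ hx
  refine ⟨_, hD.sqrt hp.ne', ?_⟩
  intro k
  simp only [_root_.smul_apply, hDk, smul_eq_mul, gQ]
  have h1 := Real.mul_self_sqrt hp.le
  have h2 := Real.sqrt_pos.2 hp
  set s := Real.sqrt (gevDensity θ x)
  rw [← h1]; field_simp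

lemma quad_zero (A B C : ℝ) : (∀ s, A + B * s + C * s ^ 2 = 0) ∨ {s : ℝ | A + B * s + C * s ^ 2 = 0}.Countable := by
  by_cases h : A = 0 ∧ B = 0 ∧ C = 0
  · left; simp [h.1, h.2.1, h.2.2]
  · right
    set P : Polynomial ℝ := Polynomial.C A + Polynomial.C B * Polynomial.X + Polynomial.C C * Polynomial.X ^ 2 with hP
    have hP0 : P ≠ 0 := by
      intro h0
      apply h
      have h1 := congrArg (fun p => Polynomial.coeff p 0) h0
      have h2 := congrArg (fun p => Polynomial.coeff p 1) h0
      have h3 := congrArg (fun p => Polynomial.coeff p 2) h0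
      simp [hP, Polynomial.coeff_X, Polynomial.coeff_C, Polynomial.coeff_X_pow] at h1 h2 h3
      exact ⟨h1, h2, h3⟩
    refine (Set.Finite.subset (Polynomial.finite_setOfPred_isRoot hP0) ?_).countable
    intro s hs
    simp [hP, Polynomial.IsRoot] at hs ⊢
    exact hs

lemma path_bound (θ δ : ℝ × ℝ × ℝ) (hs : ∀ s ∈ Icc (0:ℝ) 1, 0 < (θ + s • δ).2.2 ∧ -1 < (θ + s • δ).1) (x : ℝ) :
    ENNReal.ofReal ((gQ (θ + δ) x - gQ θ x) ^ 2) ≤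
      ∫⁻ s in Icc (0:ℝ) 1, ENNReal.ofReal ((1 / 2 * gQ (θ + s • δ) x * gSig (θ + s • δ) δ (gL (θ + s • δ) x)) ^ 2) := by
  set f : ℝ → ℝ := fun s => gQ (θ + s • δ) x with hf
  set f' : ℝ → ℝ := fun s => 1 / 2 * gQ (θ + s • δ) x * gSig (θ + s • δ) δ (gL (θ + s • δ) x) with hf'
  have hm : Measurable f' := by
    have m1 : Measurable (fun s : ℝ => (θ + s • δ, x)) := by fun_prop
    have m2 := gL_meas.comp m1
    have m3 : Measurable (fun s : ℝ => (θ + s • δ, gL (θ + s • δ) x)) :=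
      Measurable.prodMk (by fun_prop) m2
    have m4 := (gSig_meas δ).comp m3
    have m5 := (gevDensity_meas.comp m1).sqrt
    exact (m5.const_mul (1/2)).mul m4
  by_cases htop : ∫⁻ s in Icc (0:ℝ) 1, ENNReal.ofReal (f' s ^ 2) = ⊤
  · rw [htop]; exact le_top
  have hI2 : IntegrableOn (fun s => f' s ^ 2) (Icc 0 1) := by
    refine ⟨(hm.pow_const 2).aestronglyMeasurable, ?_⟩
    rw [hasFiniteIntegral_iff_ofReal (ae_of_all _ fun s => sq_nonneg _)]
    exact lt_top_iff_ne_top.2 htop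
  have hI : IntegrableOn f' (Icc 0 1) := by
    refine Integrable.mono' ((integrableOn_const (C := (1:ℝ)) (by simp)).add hI2) hm.aestronglyMeasurable ?_
    refine ae_of_all _ fun s => ?_
    simp only [Pi.add_apply, Real.norm_eq_abs]
    rw [← sq_abs]; nlinarith [sq_nonneg (|f' s| - 1), abs_nonneg (f' s)]
  have key : f 1 - f 0 = ∫ s in Icc (0:ℝ) 1, f' s := by
    have hcont : ContinuousOn f (uIcc 0 1) := by
      intro s h01
      rw [uIcc_of_le zero_le_one] at h01
      obtain ⟨h1, h2⟩ := hs s h01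
      have c := gQ_contAt h1 h2 x
      have : ContinuousAt (fun s : ℝ => θ + s • δ) s := by fun_prop
      exact (ContinuousAt.comp (g := fun θ => gQ θ x) (f := fun s : ℝ => θ + s • δ) c this).continuousWithinAt
    rw [integral_Icc_eq_integral_Ioc, ← intervalIntegral.integral_of_le zero_le_one]
    have hII : IntervalIntegrable f' volume 0 1 := by
      rw [intervalIntegrable_iff_integrableOn_Icc_of_le zero_le_one]; exact hI
    set y : ℝ → ℝ := fun s => (θ + s • δ).2.2 + (θ + s • δ).1 * (x - (θ + s • δ).2.1) with hy
    have hyc : Continuous y := by rw [hy]; fun_prop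
    have hneg : ∀ s, ¬ 0 < y s → f s = 0 ∧ f' s = 0 := by
      intro s h
      have : gQ (θ + s • δ) x = 0 := by simp only [gQ, gevDensity]; rw [if_neg h]; simp
      simp [hf, hf', this]
    have hyq : ∀ s, y s = (θ.2.2 + θ.1 * (x - θ.2.1)) + (δ.2.2 + δ.1 * (x - θ.2.1) - θ.1 * δ.2.1) * s
        + (- δ.1 * δ.2.1) * s ^ 2 := by
      intro s; simp [hy]; ring
    rcases quad_zero (θ.2.2 + θ.1 * (x - θ.2.1)) (δ.2.2 + δ.1 * (x - θ.2.1) - θ.1 * δ.2.1) (- δ.1 * δ.2.1) with h0 | hcount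
    · have h1 : ∀ s, ¬ 0 < y s := by intro s; rw [hyq, h0]; simp
      have h2 : f' = fun _ => 0 := funext fun s => (hneg s (h1 s)).2
      rw [(hneg 1 (h1 1)).1, (hneg 0 (h1 0)).1, h2]; simp
    · symm
      refine integral_eq_of_hasDerivAt_off_countable f f' hcount hcont ?_ hII
      intro s hs2
      have hsI : s ∈ Icc (0:ℝ) 1 := by
        have := hs2.1; simp at this; exact ⟨this.1.le, this.2.le⟩
      have hys : y s ≠ 0 := by
        intro h; apply hs2.2; rw [hyq] at h; exact h
      rcases lt_or_gt_of_ne hys with h | h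
      · have hev : f =ᶠ[nhds s] fun _ => 0 := by
          filter_upwards [hyc.continuousAt.eventually_lt_const h] with v hv
          exact (hneg v (not_lt.2 hv.le)).1
        rw [(hneg s (not_lt.2 h.le)).2]
        exact (hasDerivAt_const s (0:ℝ)).congr_of_eventuallyEq hev
      · obtain ⟨D, hD, hDk⟩ := gQ_hasFDeriv (hs s hsI).1 h
        have hc : HasDerivAt (fun s : ℝ => θ + s • δ) δ s := by
          simpa using ((hasDerivAt_id s).smul_const δ).const_add θ
        have := hD.comp_hasDerivAt s hc
        rw [hDk] at this
        exact this
  have hf1 : f 1 = gQ (θ + δ) x := by simp [hf]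
  have hf0 : f 0 = gQ θ x := by simp [hf]
  rw [← hf1, ← hf0, key, ← ofReal_integral_eq_lintegral_ofReal hI2 (ae_of_all _ fun s => sq_nonneg _)]
  apply ENNReal.ofReal_le_ofReal
  set c := ∫ s in Icc (0:ℝ) 1, f' s with hc
  have h1 : ∫ s in Icc (0:ℝ) 1, (2 * c * f' s - c ^ 2) ≤ ∫ s in Icc (0:ℝ) 1, f' s ^ 2 := by
    refine integral_mono ((hI.const_mul _).sub (integrableOn_const (by simp))) hI2 fun s => ?_
    nlinarith [sq_nonneg (f' s - c)]
  rw [integral_sub (hI.const_mul _) (integrableOn_const (by simp)), integral_const_mul, ← hc] at h1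
  simp at h1
  nlinarith

lemma gev_fisher_lintegral {θ : ℝ × ℝ × ℝ} (hσ : 0 < θ.2.2) (hγ : -(1/2) < θ.1) (k : ℝ × ℝ × ℝ) :
    ∫⁻ x, ENNReal.ofReal ((1 / 2 * gQ θ x * gSig θ k (gL θ x)) ^ 2) = ENNReal.ofReal (1 / 4 * gJ θ k) := by
  have h := gev_lintegral hσ (fun l => ENNReal.ofReal (1 / 4 * gSig θ k l ^ 2))
  have h1 : ∀ x, ENNReal.ofReal ((1 / 2 * gQ θ x * gSig θ k (gL θ x)) ^ 2) =
      ENNReal.ofReal (gevDensity θ x) * ENNReal.ofReal (1 / 4 * gSig θ k (gL θ x) ^ 2) := by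
    intro x
    have h0 := gevDensity_nonneg hσ x
    rw [← ENNReal.ofReal_mul h0]
    congr 1
    have := Real.sq_sqrt h0
    simp only [gQ]
    rw [mul_pow, mul_pow, this]; ring
  simp only [h1]
  rw [h]
  unfold gJ
  rw [← integral_const_mul, ofReal_integral_eq_lintegral_ofReal
    ((gSig_sq_integrable θ k hγ hσ).const_mul _) (ae_of_all _ fun l => by positivity)]
  congr 1; funext l
  rw [← ENNReal.ofReal_mul (by positivity)]
  congr 1; ring

lemma hell_bound (θ δ : ℝ × ℝ × ℝ) (hs : ∀ s ∈ Icc (0:ℝ) 1, 0 < (θ + s • δ).2.2 ∧ -(1/2) < (θ + s • δ).1)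
    (M : ℝ) (hM : ∀ s ∈ Icc (0:ℝ) 1, gJ (θ + s • δ) δ ≤ M) :
    ∫⁻ x, ENNReal.ofReal ((gQ (θ + δ) x - gQ θ x) ^ 2) ≤ ENNReal.ofReal (1 / 4 * M) := by
  calc _ ≤ ∫⁻ x, ∫⁻ s in Icc (0:ℝ) 1, ENNReal.ofReal ((1 / 2 * gQ (θ + s • δ) x * gSig (θ + s • δ) δ (gL (θ + s • δ) x)) ^ 2) :=
        lintegral_mono fun x => path_bound θ δ (fun s h => ⟨(hs s h).1, by linarith [(hs s h).2]⟩) x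
    _ = ∫⁻ s in Icc (0:ℝ) 1, ∫⁻ x, ENNReal.ofReal ((1 / 2 * gQ (θ + s • δ) x * gSig (θ + s • δ) δ (gL (θ + s • δ) x)) ^ 2) := by
        apply lintegral_lintegral_swap
        apply Measurable.aemeasurable
        have m1 : Measurable (fun p : ℝ × ℝ => (θ + p.2 • δ, p.1)) := by fun_prop
        have m2 := gL_meas.comp m1
        have m3 : Measurable (fun p : ℝ × ℝ => (θ + p.2 • δ, gL (θ + p.2 • δ) p.1)) :=
          Measurable.prodMk (by fun_prop) m2
        have m4 := (gSig_meas δ).comp m3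
        have m5 := (gevDensity_meas.comp m1).sqrt
        exact (((m5.const_mul (1/2)).mul m4).pow_const 2).ennreal_ofReal
    _ ≤ ∫⁻ s in Icc (0:ℝ) 1, ENNReal.ofReal (1 / 4 * M) := by
        refine setLIntegral_mono measurable_const fun s h => ?_
        rw [gev_fisher_lintegral (hs s h).1 (hs s h).2]
        apply ENNReal.ofReal_le_ofReal
        linarith [hM s h]
    _ = _ := by simp

lemma gJ_smul (θ k : ℝ × ℝ × ℝ) (t : ℝ) : gJ θ (t • k) = t ^ 2 * gJ θ k := by
  unfold gJ
  rw [← integral_const_mul]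
  congr 1; funext l
  rw [gSig_smul]; ring

lemma int_expexp : Integrable (fun l : ℝ => Real.exp (l - Real.exp l)) ∧ ∫ l : ℝ, Real.exp (l - Real.exp l) = 1 := by
  have hd : ∀ l : ℝ, HasDerivAt (fun l => - Real.exp (- Real.exp l)) (Real.exp (l - Real.exp l)) l := by
    intro l
    refine ((Real.hasDerivAt_exp l).neg.exp).neg.congr_deriv ?_
    rw [sub_eq_add_neg, Real.exp_add, Pi.neg_apply]; ring
  have t1 : Tendsto (fun l => - Real.exp (- Real.exp l)) atBot (nhds (-1)) := by
    have : Tendsto (fun l => - Real.exp (- Real.exp l)) atBot (nhds (-Real.exp (-0))) :=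
      ((Real.continuous_exp.tendsto _).comp (Real.tendsto_exp_atBot.neg)).neg
    simpa using this
  have t2 : Tendsto (fun l => - Real.exp (- Real.exp l)) atTop (nhds 0) := by
    have : Tendsto (fun l => - Real.exp (- Real.exp l)) atTop (nhds (-0)) :=
      (Real.tendsto_exp_atBot.comp (tendsto_neg_atTop_atBot.comp Real.tendsto_exp_atTop)).neg
    simpa using this
  have hI : Integrable (fun l : ℝ => Real.exp (l - Real.exp l)) := by
    rw [← integrableOn_univ, ← Iic_union_Ioi (a := (0:ℝ))]
    apply IntegrableOn.union
    · refine Integrable.mono' (integrableOn_exp_Iic 0)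
        (Continuous.aestronglyMeasurable (by fun_prop)) (ae_of_all _ fun l => ?_)
      rw [Real.norm_eq_abs, Real.abs_exp]
      exact Real.exp_le_exp.2 (by linarith [Real.exp_pos l])
    · exact integrableOn_Ioi_deriv_of_nonneg' (fun l _ => hd l) (fun l _ => (Real.exp_pos _).le) t2
  refine ⟨hI, ?_⟩
  rw [integral_of_hasDerivAt_of_tendsto hd hI t1 t2]; norm_num

lemma dens_lintegral {θ : ℝ × ℝ × ℝ} (hσ : 0 < θ.2.2) : ∫⁻ x, ENNReal.ofReal (gevDensity θ x) = 1 := by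
  have h := gev_lintegral hσ (fun _ => 1)
  simp only [mul_one] at h
  rw [h, ← ofReal_integral_eq_lintegral_ofReal int_expexp.1 (ae_of_all _ fun l => (Real.exp_pos _).le),
    int_expexp.2, ENNReal.ofReal_one]

lemma dens_meas (θ : ℝ × ℝ × ℝ) : Measurable (gevDensity θ) :=
  gevDensity_meas.comp (measurable_const.prodMk measurable_id)

lemma dens_integrable {θ : ℝ × ℝ × ℝ} (hσ : 0 < θ.2.2) : Integrable (gevDensity θ) := by
  refine ⟨(dens_meas θ).aestronglyMeasurable, ?_⟩
  rw [hasFiniteIntegral_iff_ofReal (ae_of_all _ fun x => gevDensity_nonneg hσ x), dens_lintegral hσ]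
  simp

lemma dens_integral {θ : ℝ × ℝ × ℝ} (hσ : 0 < θ.2.2) : ∫ x, gevDensity θ x = 1 := by
  rw [integral_eq_lintegral_of_nonneg_ae (ae_of_all _ fun x => gevDensity_nonneg hσ x)
    (dens_meas θ).aestronglyMeasurable, dens_lintegral hσ]
  simp

noncomputable def gR (w : ℝ) : ℝ := 2 * Real.log (1 + w + w ^ 2 / 2) - 2 * w

lemma gR_den (w : ℝ) : 1 / 2 ≤ 1 + w + w ^ 2 / 2 := by nlinarith [sq_nonneg (1 + w)]

lemma gR_deriv (w : ℝ) : HasDerivAt gR (-w ^ 2 / (1 + w + w ^ 2 / 2)) w := by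
  have h0 := gR_den w
  have h1 : HasDerivAt (fun w : ℝ => 1 + w + w ^ 2 / 2) (1 + w) w := by
    refine (((hasDerivAt_id w).const_add 1).add ((hasDerivAt_pow 2 w).div_const 2)).congr_deriv ?_
    simp
  refine (((h1.log (by linarith)).const_mul 2).sub ((hasDerivAt_id w).const_mul 2)).congr_deriv ?_
  obtain ⟨D, hD⟩ : ∃ D, D = 1 + w + w ^ 2 / 2 := ⟨_, rfl⟩
  have hD0 : D ≠ 0 := by rw [hD]; linarith
  rw [← hD]
  field_simp
  rw [hD]
  ring

lemma gR_zero : gR 0 = 0 := by simp [gR]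

lemma gR_d1 (w : ℝ) : |-w ^ 2 / (1 + w + w ^ 2 / 2)| ≤ 3 * |w| := by
  have h0 := gR_den w
  rw [abs_div, abs_neg, abs_of_nonneg (sq_nonneg w), abs_of_pos (by linarith : 0 < 1 + w + w ^ 2 / 2),
    div_le_iff₀ (by linarith)]
  rw [← sq_abs w]
  have : |w| ≤ 3 * (1 + w + |w| ^ 2 / 2) := by
    rcases abs_cases w with ⟨h, _⟩ | ⟨h, _⟩ <;> rw [h]
    · nlinarith
    · nlinarith [sq_nonneg (w + 4 / 3)]
  nlinarith [abs_nonneg w]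

lemma gR_d2 (w : ℝ) : |-w ^ 2 / (1 + w + w ^ 2 / 2)| ≤ 2 * w ^ 2 := by
  have h0 := gR_den w
  rw [abs_div, abs_neg, abs_of_nonneg (sq_nonneg w), abs_of_pos (by linarith : 0 < 1 + w + w ^ 2 / 2),
    div_le_iff₀ (by linarith)]
  nlinarith [sq_nonneg w]

lemma gR_mv (w C : ℝ) (hC : ∀ s, |s| ≤ |w| → |-s ^ 2 / (1 + s + s ^ 2 / 2)| ≤ C) : |gR w| ≤ C * |w| := by
  have := (convex_uIcc (0:ℝ) w).norm_image_sub_le_of_norm_hasDerivWithin_le (f := gR)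
    (f' := fun s => -s ^ 2 / (1 + s + s ^ 2 / 2)) (C := C) (x := 0) (y := w)
    (fun s _ => (gR_deriv s).hasDerivWithinAt)
    (fun s hs => hC s (by
      have := abs_sub_left_of_mem_uIcc hs
      simpa using this)) left_mem_uIcc right_mem_uIcc
  simpa [gR_zero] using this

lemma gR_le2 (w : ℝ) : |gR w| ≤ 3 * w ^ 2 := by
  have := gR_mv w (3 * |w|) (fun s hs => (gR_d1 s).trans (by linarith))
  rw [← sq_abs w]; nlinarith

lemma gR_le3 (w : ℝ) : |gR w| ≤ 2 * w ^ 2 * |w| :=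
  gR_mv w (2 * w ^ 2) (fun s hs => (gR_d2 s).trans (by
    have := sq_le_sq.2 hs; linarith))

lemma gR_meas : Measurable gR := by unfold gR; fun_prop

lemma fatou_ev {l : Filter ℝ} [l.IsCountablyGenerated] [l.NeBot] {f : ℝ → ℝ → ℝ} {g : ℝ → ℝ}
    (hm : ∀ t, Measurable (f t)) (hnn : ∀ t x, 0 ≤ f t x)
    (hi : ∀ᶠ t in l, Integrable (f t))
    (hlim : ∀ x, Tendsto (fun t => f t x) l (nhds (g x)))
    (hg : Integrable g) (hg0 : ∀ x, 0 ≤ g x) {ε : ℝ} (hε : 0 < ε) :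
    ∀ᶠ t in l, (∫ x, g x) - ε < ∫ x, f t x := by
  by_cases h0 : (∫ x, g x) - ε < 0
  · exact Eventually.of_forall fun t => h0.trans_le (integral_nonneg (hnn t))
  · push Not at h0
    have h1 : ENNReal.ofReal ((∫ x, g x) - ε) < liminf (fun t => ∫⁻ x, ENNReal.ofReal (f t x)) l := by
      calc ENNReal.ofReal ((∫ x, g x) - ε) < ENNReal.ofReal (∫ x, g x) := by
            rw [ENNReal.ofReal_lt_ofReal_iff (by linarith)]; linarith
        _ = ∫⁻ x, ENNReal.ofReal (g x) := ofReal_integral_eq_lintegral_ofReal hg (ae_of_all _ hg0)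
        _ = ∫⁻ x, liminf (fun t => ENNReal.ofReal (f t x)) l := by
            congr 1; funext x
            exact ((ENNReal.continuous_ofReal.tendsto _).comp (hlim x)).liminf_eq.symm
        _ ≤ _ := lintegral_liminf_le (fun t => (hm t).ennreal_ofReal)
    filter_upwards [eventually_lt_of_lt_liminf h1, hi] with t ht hit
    rw [← ofReal_integral_eq_lintegral_ofReal hit (ae_of_all _ (hnn t)), ENNReal.ofReal_lt_ofReal_iff'] at ht
    exact ht.1

/-- Pratt-type squeeze. -/
lemma pratt_ev {l : Filter ℝ} [l.IsCountablyGenerated] [l.NeBot] {a a' b : ℝ → ℝ → ℝ} {g : ℝ → ℝ}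
    (hma : ∀ t, Measurable (a' t)) (hmb : ∀ t, Measurable (b t)) (hnn : ∀ t x, 0 ≤ a' t x)
    (haa : ∀ t x, a' t x ≤ a t x) (hb : ∀ t x, |b t x| ≤ 3 * a' t x)
    (hi : ∀ᶠ t in l, Integrable (a t))
    (hlim : ∀ x, Tendsto (fun t => a' t x) l (nhds (g x)))
    (hlimb : ∀ x, Tendsto (fun t => b t x) l (nhds 0))
    (hg : Integrable g) (hg0 : ∀ x, 0 ≤ g x)
    (hup : ∀ ε > 0, ∀ᶠ t in l, ∫ x, a t x < (∫ x, g x) + ε) :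
    (∀ᶠ t in l, Integrable (b t)) ∧
    Tendsto (fun t => -(∫ x, a t x) + ∫ x, b t x) l (nhds (-∫ x, g x)) := by
  have hi' : ∀ᶠ t in l, Integrable (a' t) := by
    filter_upwards [hi] with t ht
    exact ht.mono' (hma t).aestronglyMeasurable
      (ae_of_all _ fun x => by rw [Real.norm_of_nonneg (hnn t x)]; exact haa t x)
  have hib : ∀ᶠ t in l, Integrable (b t) := by
    filter_upwards [hi'] with t ht
    exact (ht.const_mul 3).mono' (hmb t).aestronglyMeasurable (ae_of_all _ fun x => hb t x)
  refine ⟨hib, ?_⟩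
  rw [Metric.tendsto_nhds]
  intro ε hε
  set δ := ε / 20 with hδ
  have hδ0 : 0 < δ := by positivity
  have e1 := fatou_ev hma hnn hi' hlim hg hg0 hδ0
  have e2 := fatou_ev (f := fun t x => 3 * a' t x + b t x) (g := fun x => 3 * g x)
    (fun t => ((hma t).const_mul 3).add (hmb t))
    (fun t x => by have := (abs_le.1 (hb t x)).1; linarith)
    (by filter_upwards [hi', hib] with t h1 h2 using (h1.const_mul 3).add h2)
    (fun x => by simpa using ((hlim x).const_mul 3).add (hlimb x))
    (hg.const_mul 3) (fun x => by have := hg0 x; linarith) hδ0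
  have e3 := fatou_ev (f := fun t x => 3 * a' t x - b t x) (g := fun x => 3 * g x)
    (fun t => ((hma t).const_mul 3).sub (hmb t))
    (fun t x => by have := (abs_le.1 (hb t x)).2; linarith)
    (by filter_upwards [hi', hib] with t h1 h2 using (h1.const_mul 3).sub h2)
    (fun x => by simpa using ((hlim x).const_mul 3).sub (hlimb x))
    (hg.const_mul 3) (fun x => by have := hg0 x; linarith) hδ0
  filter_upwards [e1, e2, e3, hup δ hδ0, hi, hi', hib] with t h1 h2 h3 h4 i1 i2 i3
  rw [integral_add (i2.const_mul 3) i3, integral_const_mul, integral_const_mul] at h2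
  rw [integral_sub (i2.const_mul 3) i3, integral_const_mul, integral_const_mul] at h3
  have h5 : ∫ x, a' t x ≤ ∫ x, a t x := integral_mono i2 i1 (haa t)
  rw [Real.dist_eq, abs_lt]
  constructor <;> linarith

lemma gQ_sq {θ : ℝ × ℝ × ℝ} (hσ : 0 < θ.2.2) (x : ℝ) : gQ θ x ^ 2 = gevDensity θ x :=
  Real.sq_sqrt (gevDensity_nonneg hσ x)

lemma gQ_nonneg (θ : ℝ × ℝ × ℝ) (x : ℝ) : 0 ≤ gQ θ x := Real.sqrt_nonneg _

lemma gQ_meas (θ : ℝ × ℝ × ℝ) : Measurable (gQ θ) := (dens_meas θ).sqrt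

lemma gQ_pos {θ : ℝ × ℝ × ℝ} (hσ : 0 < θ.2.2) {x : ℝ} (hx : 0 < θ.2.2 + θ.1 * (x - θ.2.1)) :
    0 < gQ θ x := Real.sqrt_pos.2 (gevDensity_pos hσ hx)

lemma gQ_off {θ : ℝ × ℝ × ℝ} {x : ℝ} (hx : ¬ 0 < θ.2.2 + θ.1 * (x - θ.2.1)) : gQ θ x = 0 := by
  simp [gQ, gevDensity, hx]

lemma dens_off {θ : ℝ × ℝ × ℝ} {x : ℝ} (hx : ¬ 0 < θ.2.2 + θ.1 * (x - θ.2.1)) : gevDensity θ x = 0 := by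
  simp [gevDensity, hx]

lemma gQ_lim {θ : ℝ × ℝ × ℝ} (hσ : 0 < θ.2.2) {x : ℝ} (hx : 0 < θ.2.2 + θ.1 * (x - θ.2.1))
    {h : ℝ × ℝ × ℝ} {H : ℝ → ℝ × ℝ × ℝ}
    (hH : Tendsto H (nhdsWithin 0 {(0 : ℝ)}ᶜ) (nhds h)) :
    Tendsto (fun t : ℝ => (gQ (θ + t • H t) x - gQ θ x) / t) (nhdsWithin 0 {(0 : ℝ)}ᶜ)
      (nhds (1 / 2 * gQ θ x * gSig θ h (gL θ x))) := by
  obtain ⟨D, hD, hDk⟩ := gQ_hasFDeriv hσ hx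
  rw [← hDk]
  have ht : Tendsto (fun t : ℝ => t) (nhdsWithin 0 {(0 : ℝ)}ᶜ) (nhds 0) :=
    tendsto_id.mono_left nhdsWithin_le_nhds
  have h1 : Tendsto (fun t : ℝ => t • H t) (nhdsWithin 0 {(0 : ℝ)}ᶜ) (nhds 0) := by
    simpa using ht.smul hH
  have h2 : Tendsto (fun t : ℝ => t⁻¹ • (t • H t)) (nhdsWithin 0 {(0 : ℝ)}ᶜ) (nhds h) := by
    refine hH.congr' ?_
    filter_upwards [self_mem_nhdsWithin] with t ht
    rw [smul_smul, inv_mul_cancel₀ ht, one_smul]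
  have := (hD.hasFDerivWithinAt (s := univ)).lim h1 (Eventually.of_forall fun _ => mem_univ _) h2
  refine this.congr fun t => ?_
  simp [div_eq_inv_mul]

lemma seg_bound {θ h : ℝ × ℝ × ℝ} (hγ : -(1/2) < θ.1) (hσ : 0 < θ.2.2) {H : ℝ → ℝ × ℝ × ℝ}
    (hH : Tendsto H (nhdsWithin 0 {(0 : ℝ)}ᶜ) (nhds h)) {ε : ℝ} (hε : 0 < ε) :
    ∀ᶠ t in nhdsWithin 0 {(0 : ℝ)}ᶜ,
      (∀ s ∈ Icc (0:ℝ) 1, 0 < (θ + s • (t • H t)).2.2 ∧ -(1/2) < (θ + s • (t • H t)).1) ∧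
      ∫⁻ x, ENNReal.ofReal ((gQ (θ + t • H t) x - gQ θ x) ^ 2) ≤
        ENNReal.ofReal (1 / 4 * (t ^ 2 * (gJ θ h + ε))) := by
  have ht : Tendsto (fun t : ℝ => t) (nhdsWithin 0 {(0 : ℝ)}ᶜ) (nhds 0) :=
    tendsto_id.mono_left nhdsWithin_le_nhds
  have h1 : Tendsto (fun t : ℝ => t • H t) (nhdsWithin 0 {(0 : ℝ)}ᶜ) (nhds 0) := by
    simpa using ht.smul hH
  have c1 := (gJ_contAt θ h hγ hσ).eventually (gt_mem_nhds (lt_add_of_pos_right (gJ θ h) hε))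
  have c2 : ∀ᶠ p : (ℝ × ℝ × ℝ) × (ℝ × ℝ × ℝ) in nhds (θ, h), 0 < p.1.2.2 :=
    (by fun_prop : ContinuousAt (fun p : (ℝ × ℝ × ℝ) × (ℝ × ℝ × ℝ) => p.1.2.2) (θ, h)).eventually
      (lt_mem_nhds hσ)
  have c3 : ∀ᶠ p : (ℝ × ℝ × ℝ) × (ℝ × ℝ × ℝ) in nhds (θ, h), -(1/2) < p.1.1 :=
    (by fun_prop : ContinuousAt (fun p : (ℝ × ℝ × ℝ) × (ℝ × ℝ × ℝ) => p.1.1) (θ, h)).eventually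
      (lt_mem_nhds hγ)
  obtain ⟨r, hr, hb⟩ := Metric.eventually_nhds_iff.1 (c1.and (c2.and c3))
  filter_upwards [Metric.tendsto_nhds.1 h1 r hr, Metric.tendsto_nhds.1 hH r hr] with t t1 t2
  have key : ∀ s ∈ Icc (0:ℝ) 1, gJ (θ + s • (t • H t)) (H t) < gJ θ h + ε ∧
      0 < (θ + s • (t • H t)).2.2 ∧ -(1/2) < (θ + s • (t • H t)).1 := by
    intro s hs
    refine @hb (θ + s • (t • H t), H t) ?_
    rw [Prod.dist_eq]
    refine max_lt ?_ t2
    rw [dist_zero_right] at t1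
    rw [dist_self_add_left, norm_smul, Real.norm_of_nonneg hs.1]
    calc s * ‖t • H t‖ ≤ 1 * ‖t • H t‖ := by gcongr; exact hs.2
      _ < r := by simpa using t1
  refine ⟨fun s hs => (key s hs).2, ?_⟩
  refine hell_bound θ (t • H t) (fun s hs => (key s hs).2) _ fun s hs => ?_
  rw [gJ_smul]
  have := (key s hs).1.le
  gcongr

lemma ginf_int {θ : ℝ × ℝ × ℝ} (hγ : -(1/2) < θ.1) (hσ : 0 < θ.2.2) (k : ℝ × ℝ × ℝ) :
    Integrable (fun x => (1 / 2 * gQ θ x * gSig θ k (gL θ x)) ^ 2) ∧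
    ∫ x, (1 / 2 * gQ θ x * gSig θ k (gL θ x)) ^ 2 = 1 / 4 * gJ θ k := by
  have hl := gev_fisher_lintegral hσ hγ k
  have hm : Measurable (fun x => (1 / 2 * gQ θ x * gSig θ k (gL θ x)) ^ 2) := by
    have m1 := gQ_meas θ
    have m2 : Measurable (gL θ) := gL_meas.comp (measurable_const.prodMk measurable_id)
    have m3 : Measurable (fun x => gSig θ k (gL θ x)) := (gSig_cont_right θ k).measurable.comp m2
    exact ((m1.const_mul _).mul m3).pow_const 2
  have hJ : 0 ≤ gJ θ k := integral_nonneg fun l => by positivity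
  constructor
  · refine ⟨hm.aestronglyMeasurable, ?_⟩
    rw [hasFiniteIntegral_iff_ofReal (ae_of_all _ fun x => sq_nonneg _), hl]
    exact ENNReal.ofReal_lt_top
  · rw [integral_eq_lintegral_of_nonneg_ae (ae_of_all _ fun x => sq_nonneg _) hm.aestronglyMeasurable, hl,
      ENNReal.toReal_ofReal (by positivity)]

lemma fisher_quad {θ : ℝ × ℝ × ℝ} (hγ : -(1/2) < θ.1) (hσ : 0 < θ.2.2) (h : ℝ × ℝ × ℝ) :
    toVec3 h ⬝ᵥ (gevFisher θ).mulVec (toVec3 h) = gJ θ h := by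
  -- integrand representation
  have conv : ∀ f : ℝ → ℝ, ∫ x, f x ∂(gevMeasure θ) = ∫ x, gevDensity θ x * f x := by
    intro f
    rw [gevMeasure, integral_withDensity_eq_integral_toReal_smul (dens_meas θ).ennreal_ofReal
      (ae_of_all _ fun x => ENNReal.ofReal_lt_top)]
    congr 1; funext x
    rw [ENNReal.toReal_ofReal (gevDensity_nonneg hσ x), smul_eq_mul]
  let e : Fin 3 → ℝ × ℝ × ℝ := ![(1, 0, 0), (0, 1, 0), (0, 0, 1)]
  have sc : ∀ (i : Fin 3) x, gQ θ x * gevScore θ x i = gQ θ x * gSig θ (e i) (gL θ x) := by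
    intro i x
    by_cases hx : 0 < θ.2.2 + θ.1 * (x - θ.2.1)
    · rw [← score_eq hσ hx]
      fin_cases i <;> simp [e, toVec3, dotProduct, Fin.sum_univ_three]
    · simp [gQ_off hx]
  have m1 := gQ_meas θ
  have m2 : Measurable (gL θ) := gL_meas.comp (measurable_const.prodMk measurable_id)
  have m3 : ∀ k, Measurable (fun x => gQ θ x * gSig θ k (gL θ x)) := fun k =>
    m1.mul ((gSig_cont_right θ k).measurable.comp m2)
  have pe : ∀ i j x, gevDensity θ x * (gevScore θ x i * gevScore θ x j)
      = (gQ θ x * gSig θ (e i) (gL θ x)) * (gQ θ x * gSig θ (e j) (gL θ x)) := by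
    intro i j x
    rw [← sc, ← sc, ← gQ_sq hσ]; ring
  have ij : ∀ i j, Integrable (fun x => gevDensity θ x * (gevScore θ x i * gevScore θ x j)) := by
    intro i j
    simp only [pe]
    refine (((ginf_int hγ hσ (e i)).1.const_mul 2).add ((ginf_int hγ hσ (e j)).1.const_mul 2)).mono'
      ((m3 _).mul (m3 _)).aestronglyMeasurable (ae_of_all _ fun x => ?_)
    simp only [Pi.add_apply, Real.norm_eq_abs]
    rw [abs_le]
    constructor
    · nlinarith [sq_nonneg (gQ θ x * gSig θ (e i) (gL θ x) + gQ θ x * gSig θ (e j) (gL θ x))]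
    · nlinarith [sq_nonneg (gQ θ x * gSig θ (e i) (gL θ x) - gQ θ x * gSig θ (e j) (gL θ x))]
  have e1 : toVec3 h ⬝ᵥ (gevFisher θ).mulVec (toVec3 h) =
      ∫ x, ∑ i, ∑ j, toVec3 h i * toVec3 h j * (gevDensity θ x * (gevScore θ x i * gevScore θ x j)) := by
    rw [integral_finsetSum _ fun i _ => integrable_finsetSum _ fun j _ => (ij i j).const_mul _]
    simp only [dotProduct, Matrix.mulVec, gevFisher, Matrix.of_apply, Finset.mul_sum]
    refine Finset.sum_congr rfl fun i _ => ?_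
    rw [integral_finsetSum _ fun j _ => (ij i j).const_mul _]
    refine Finset.sum_congr rfl fun j _ => ?_
    rw [conv, integral_const_mul]; ring
  have e2 := (ginf_int hγ hσ h).2
  have e3 : ∀ x, ∑ i, ∑ j, toVec3 h i * toVec3 h j * (gevDensity θ x * (gevScore θ x i * gevScore θ x j))
      = 4 * (1 / 2 * gQ θ x * gSig θ h (gL θ x)) ^ 2 := by
    intro x
    have : gQ θ x * gSig θ h (gL θ x) = gQ θ x * (toVec3 h ⬝ᵥ gevScore θ x) := by
      by_cases hx : 0 < θ.2.2 + θ.1 * (x - θ.2.1)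
      · rw [score_eq hσ hx]
      · simp [gQ_off hx]
    rw [mul_assoc (1 / 2), this, ← gQ_sq hσ]
    simp only [dotProduct, Fin.sum_univ_three]
    ring
  rw [e1]
  simp only [e3]
  rw [integral_const_mul, e2]; ring

lemma gev_pt {θ θ' : ℝ × ℝ × ℝ} (hσ : 0 < θ.2.2) (hσ' : 0 < θ'.2.2) (x : ℝ) :
    gevDensity θ x * (gevM θ θ' x - gevM θ θ x) =
      -(gQ θ' x - gQ θ x) ^ 2 + (gevDensity θ' x - gevDensity θ x)
       + gevDensity θ x * gR (gQ θ' x / gQ θ x - 1) := by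
  by_cases hx : 0 < θ.2.2 + θ.1 * (x - θ.2.1)
  · have q0 := gQ_pos hσ hx
    have p0 := gQ_sq hσ x
    have p1 := gQ_sq hσ' x
    have a1 : gevM θ θ x = 0 := by
      have : gevDensity θ x ≠ 0 := (gevDensity_pos hσ hx).ne'
      rw [gevM, ← two_mul, div_self (by positivity)]; simp
    have a2 : (gevDensity θ' x + gevDensity θ x) / (2 * gevDensity θ x) =
        1 + (gQ θ' x / gQ θ x - 1) + (gQ θ' x / gQ θ x - 1) ^ 2 / 2 := by
      rw [← p0, ← p1]; field_simp; ring
    rw [a1, gevM, a2, gR, ← p0, ← p1]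
    have a3 : gQ θ x ^ 2 * (gQ θ' x / gQ θ x - 1) = gQ θ' x * gQ θ x - gQ θ x ^ 2 := by field_simp
    linear_combination 2 * a3
  · rw [dens_off hx, gQ_off hx, ← gQ_sq hσ']; ring

lemma W_sq {θ θ' : ℝ × ℝ × ℝ} (hσ : 0 < θ.2.2) {x : ℝ} (hx : 0 < θ.2.2 + θ.1 * (x - θ.2.1)) :
    gevDensity θ x * (gQ θ' x / gQ θ x - 1) ^ 2 = (gQ θ' x - gQ θ x) ^ 2 := by
  have q0 := gQ_pos hσ hx
  rw [← gQ_sq hσ x]; field_simp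

theorem gev_m_second_order (θ₀ : ℝ × ℝ × ℝ) (hγ : -(1/2) < θ₀.1) (hσ : 0 < θ₀.2.2)
    (h : ℝ × ℝ × ℝ) (H : ℝ → ℝ × ℝ × ℝ)
    (hH : Filter.Tendsto H (nhdsWithin 0 {(0 : ℝ)}ᶜ) (nhds h)) :
    Filter.Tendsto
      (fun t : ℝ =>
        (∫ x, (gevM θ₀ (θ₀ + t • H t) x - gevM θ₀ θ₀ x) ∂(gevMeasure θ₀)) / t ^ 2)
      (nhdsWithin 0 {(0 : ℝ)}ᶜ)
      (nhds (-(1 / 4) * (toVec3 h ⬝ᵥ (gevFisher θ₀).mulVec (toVec3 h)))) := by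
  rw [fisher_quad hγ hσ]
  have hJ : 0 ≤ gJ θ₀ h := integral_nonneg fun l => by positivity
  obtain ⟨hg, hgi⟩ := ginf_int hγ hσ h
  let W : ℝ → ℝ → ℝ := fun t x => gQ (θ₀ + t • H t) x / gQ θ₀ x - 1
  let a : ℝ → ℝ → ℝ := fun t x => (gQ (θ₀ + t • H t) x - gQ θ₀ x) ^ 2 / t ^ 2
  let a' : ℝ → ℝ → ℝ := fun t x => gevDensity θ₀ x * W t x ^ 2 / t ^ 2
  let b : ℝ → ℝ → ℝ := fun t x => gevDensity θ₀ x * gR (W t x) / t ^ 2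
  have mW : ∀ t, Measurable (W t) := fun t => ((gQ_meas _).div (gQ_meas _)).sub_const 1
  have ma : ∀ t, Measurable (a t) := fun t =>
    (((gQ_meas _).sub (gQ_meas _)).pow_const 2).div_const _
  have ma' : ∀ t, Measurable (a' t) := fun t =>
    ((dens_meas _).mul ((mW t).pow_const 2)).div_const _
  have mb : ∀ t, Measurable (b t) := fun t =>
    ((dens_meas _).mul (gR_meas.comp (mW t))).div_const _
  have p0 : ∀ x, 0 ≤ gevDensity θ₀ x := gevDensity_nonneg hσ
  have hnn : ∀ t x, 0 ≤ a' t x := fun t x => div_nonneg (mul_nonneg (p0 x) (sq_nonneg _)) (sq_nonneg _)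
  have hann : ∀ t x, 0 ≤ a t x := fun t x => div_nonneg (sq_nonneg _) (sq_nonneg _)
  have haa : ∀ t x, a' t x ≤ a t x := by
    intro t x
    by_cases hx : 0 < θ₀.2.2 + θ₀.1 * (x - θ₀.2.1)
    · simp only [a, a', W]; rw [W_sq hσ hx]
    · have : a' t x = 0 := by simp [a', dens_off hx]
      rw [this]; exact hann t x
  have hb : ∀ t x, |b t x| ≤ 3 * a' t x := by
    intro t x
    simp only [b, a']
    rw [abs_div, abs_mul, abs_of_nonneg (p0 x), abs_of_nonneg (sq_nonneg t), ← mul_div_assoc]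
    refine div_le_div_of_nonneg_right ?_ (sq_nonneg t)
    nlinarith [mul_le_mul_of_nonneg_left (gR_le2 (W t x)) (p0 x)]
  have hs := fun ε (hε : 0 < ε) => seg_bound hγ hσ hH hε
  have hσe : ∀ᶠ t in nhdsWithin 0 {(0 : ℝ)}ᶜ, 0 < (θ₀ + t • H t).2.2 := by
    filter_upwards [hs 1 one_pos] with t ht
    have := (ht.1 1 ⟨zero_le_one, le_rfl⟩).1
    rwa [one_smul] at this
  have hia : ∀ᶠ t in nhdsWithin 0 {(0 : ℝ)}ᶜ, Integrable (a t) := by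
    filter_upwards [hσe] with t ht
    refine Integrable.div_const ?_ _
    refine (((dens_integrable ht).const_mul 2).add ((dens_integrable hσ).const_mul 2)).mono'
      ((((gQ_meas _).sub (gQ_meas _)).pow_const 2)).aestronglyMeasurable (ae_of_all _ fun x => ?_)
    rw [Real.norm_of_nonneg (sq_nonneg _), Pi.add_apply, ← gQ_sq ht, ← gQ_sq hσ]
    nlinarith [sq_nonneg (gQ (θ₀ + t • H t) x + gQ θ₀ x)]
  have ht0 : Tendsto (fun t : ℝ => t) (nhdsWithin 0 {(0 : ℝ)}ᶜ) (nhds 0) :=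
    tendsto_id.mono_left nhdsWithin_le_nhds
  have hlim : ∀ x, Tendsto (fun t => a' t x) (nhdsWithin 0 {(0 : ℝ)}ᶜ)
      (nhds ((1 / 2 * gQ θ₀ x * gSig θ₀ h (gL θ₀ x)) ^ 2)) := by
    intro x
    by_cases hx : 0 < θ₀.2.2 + θ₀.1 * (x - θ₀.2.1)
    · refine ((gQ_lim hσ hx hH).pow 2).congr fun t => ?_
      simp only [a', W]; rw [W_sq hσ hx, div_pow]
    · simp [a', dens_off hx, gQ_off hx]
  have hlimb : ∀ x, Tendsto (fun t => b t x) (nhdsWithin 0 {(0 : ℝ)}ᶜ) (nhds 0) := by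
    intro x
    by_cases hx : 0 < θ₀.2.2 + θ₀.1 * (x - θ₀.2.1)
    · have q0 := gQ_pos hσ hx
      have hW : Tendsto (fun t => W t x) (nhdsWithin 0 {(0 : ℝ)}ᶜ) (nhds 0) := by
        have := (((gQ_lim hσ hx hH).mul ht0).div_const (gQ θ₀ x))
        rw [mul_zero, zero_div] at this
        refine this.congr' ?_
        filter_upwards [self_mem_nhdsWithin] with t ht
        have : t ≠ 0 := ht
        simp only [W]; field_simp
      have hB := ((hlim x).const_mul 2).mul hW.abs
      rw [abs_zero, mul_zero] at hB
      refine squeeze_zero_norm (fun t => ?_) hB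
      simp only [b, a', Real.norm_eq_abs]
      rw [abs_div, abs_mul, abs_of_nonneg (p0 x), abs_of_nonneg (sq_nonneg t), ← mul_div_assoc,
        div_mul_eq_mul_div]
      refine div_le_div_of_nonneg_right ?_ (sq_nonneg t)
      nlinarith [mul_le_mul_of_nonneg_left (gR_le3 (W t x)) (p0 x)]
    · simp [b, dens_off hx]
  have hup : ∀ ε > 0, ∀ᶠ t in nhdsWithin 0 {(0 : ℝ)}ᶜ,
      ∫ x, a t x < (∫ x, (1 / 2 * gQ θ₀ x * gSig θ₀ h (gL θ₀ x)) ^ 2) + ε := by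
    intro ε hε
    filter_upwards [hs ε hε, self_mem_nhdsWithin] with t ht htn
    have htn : t ≠ 0 := htn
    have hm : Measurable (fun x => (gQ (θ₀ + t • H t) x - gQ θ₀ x) ^ 2) :=
      ((gQ_meas _).sub (gQ_meas _)).pow_const 2
    have h1 : ∫ x, (gQ (θ₀ + t • H t) x - gQ θ₀ x) ^ 2 ≤ 1 / 4 * (t ^ 2 * (gJ θ₀ h + ε)) := by
      rw [integral_eq_lintegral_of_nonneg_ae (ae_of_all _ fun x => sq_nonneg _)
        hm.aestronglyMeasurable]
      exact ENNReal.toReal_le_of_le_ofReal (by positivity) ht.2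
    simp only [a]
    rw [integral_div, hgi, div_lt_iff₀ (by positivity)]
    have : 0 < t ^ 2 * ε := by positivity
    nlinarith
  obtain ⟨hib, hT⟩ := pratt_ev ma' mb hnn haa hb hia hlim hlimb hg (fun x => sq_nonneg _) hup
  rw [hgi, ← neg_mul] at hT
  refine hT.congr' ?_
  filter_upwards [hσe, hia, hib, self_mem_nhdsWithin] with t ht ia ib htn
  have htn : t ≠ 0 := htn
  rw [gevMeasure, integral_withDensity_eq_integral_toReal_smul (dens_meas θ₀).ennreal_ofReal
      (ae_of_all _ fun x => ENNReal.ofReal_lt_top), ← integral_div]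
  have e1 : ∀ x, (ENNReal.ofReal (gevDensity θ₀ x)).toReal •
      (gevM θ₀ (θ₀ + t • H t) x - gevM θ₀ θ₀ x) / t ^ 2 =
      -a t x + (gevDensity (θ₀ + t • H t) x - gevDensity θ₀ x) / t ^ 2 + b t x := by
    intro x
    rw [ENNReal.toReal_ofReal (p0 x), smul_eq_mul, gev_pt hσ ht]
    simp only [a, b, W]; ring
  simp only [e1]
  have id := ((dens_integrable ht).sub (dens_integrable hσ)).div_const (t ^ 2)
  have e2 : ∫ x, (gevDensity (θ₀ + t • H t) x - gevDensity θ₀ x) / t ^ 2 = 0 := by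
    rw [integral_div, integral_sub (dens_integrable ht) (dens_integrable hσ), dens_integral ht,
      dens_integral hσ]; simp
  have i1 : Integrable (fun x => -a t x) := ia.neg
  have i2 : Integrable (fun x => (gevDensity (θ₀ + t • H t) x - gevDensity θ₀ x) / t ^ 2) := id
  have i3 : Integrable (fun x => -a t x + (gevDensity (θ₀ + t • H t) x - gevDensity θ₀ x) / t ^ 2) :=
    i1.add i2
  rw [integral_add i3 ib, integral_add i1 i2, e2, integral_neg]
  ring
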